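/- arXiv:0801.2567 — 12 statements merged into one kernel-verified Lean document; each statement's English description precedes it below -/
import Mathlib

section
/- Let A be an associative unital k-algebra equipped with a Frobenius structure Δ. Then the k-linear map R = Δ∘μ : A⊗A → A⊗A satisfies the Yang–Baxter equation: (R⊗id)∘(id⊗R)∘(R⊗id) = (id⊗R)∘(R⊗id)∘(id⊗R) as maps A⊗A⊗A → A⊗A⊗A. -/
open TensorProduct

noncomputable section

variable (k A : Type*) [Field k] [Ring A] [Algebra k A]

/-- Multiplication `μ : A ⊗[k] A → A` as a `k`-linear map. -/
def mu : A ⊗[k] A →ₗ[k] A := LinearMap.mul' k A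

/-- The standard associator `(A⊗A)⊗A ≃ A⊗(A⊗A)`. -/
def asso : ((A ⊗[k] A) ⊗[k] A) ≃ₗ[k] (A ⊗[k] (A ⊗[k] A)) := TensorProduct.assoc k A A A

/-- The flip `τ : A⊗A → A⊗A`, `x⊗y ↦ y⊗x`. -/
def tau : A ⊗[k] A →ₗ[k] A ⊗[k] A := (TensorProduct.comm k A A).toLinearMap

/-- A Frobenius structure on `A`: a coassociative comultiplication `Δ` satisfying the two
Frobenius compatibility conditions `Δ∘μ = (μ⊗id)∘(id⊗Δ) = (id⊗μ)∘(Δ⊗id)`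
(composites taken with the standard associator identifications). -/
def IsFrobenius (Δ : A →ₗ[k] A ⊗[k] A) : Prop :=
  (Δ.rTensor A ∘ₗ Δ = (asso k A).symm.toLinearMap ∘ₗ Δ.lTensor A ∘ₗ Δ) ∧
  (Δ ∘ₗ mu k A = (mu k A).rTensor A ∘ₗ (asso k A).symm.toLinearMap ∘ₗ Δ.lTensor A) ∧
  (Δ ∘ₗ mu k A = (mu k A).lTensor A ∘ₗ (asso k A).toLinearMap ∘ₗ Δ.rTensor A)

/-- `R : A⊗A → A⊗A` satisfies the Yang–Baxter equation:
`(R⊗id)∘(id⊗R)∘(R⊗id) = (id⊗R)∘(R⊗id)∘(id⊗R)` on `A⊗A⊗A`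
(with the standard associator identifications). -/
def YBE (R : A ⊗[k] A →ₗ[k] A ⊗[k] A) : Prop :=
  R.rTensor A ∘ₗ
      ((asso k A).symm.toLinearMap ∘ₗ R.lTensor A ∘ₗ (asso k A).toLinearMap) ∘ₗ
      R.rTensor A =
    ((asso k A).symm.toLinearMap ∘ₗ R.lTensor A ∘ₗ (asso k A).toLinearMap) ∘ₗ
      R.rTensor A ∘ₗ
      ((asso k A).symm.toLinearMap ∘ₗ R.lTensor A ∘ₗ (asso k A).toLinearMap)

/-- For a Frobenius structure `Δ` on an associative unital `k`-algebra `A`,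
`R = Δ∘μ : A⊗A → A⊗A` satisfies the Yang–Baxter equation. -/
theorem ybe_of_frobenius (Δ : A →ₗ[k] A ⊗[k] A) (hΔ : IsFrobenius k A Δ) :
    YBE k A (Δ ∘ₗ mu k A) := by
  obtain ⟨hc, h1, h2⟩ := hΔ
  have hc' := fun a => LinearMap.congr_fun hc a
  have h1' := fun a => LinearMap.congr_fun h1 a
  have h2' := fun a => LinearMap.congr_fun h2 a
  have hm : ∀ v, mu k A ((mu k A).rTensor A v) = mu k A ((mu k A).lTensor A (asso k A v)) := by
    intro v
    have : mu k A ∘ₗ (mu k A).rTensor A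
        = mu k A ∘ₗ (mu k A).lTensor A ∘ₗ (asso k A).toLinearMap := by
      apply TensorProduct.ext_threefold
      intro x y z
      simp [mu, asso, mul_assoc]
    exact LinearMap.congr_fun this v
  simp only [LinearMap.comp_apply, LinearEquiv.coe_coe] at hc' h1' h2'
  unfold YBE
  apply LinearMap.ext
  intro v
  simp only [LinearMap.rTensor_comp, LinearMap.lTensor_comp, LinearMap.comp_apply,
    LinearEquiv.coe_coe, LinearEquiv.apply_symm_apply]
  rw [← h2', ← h1', ← h1', ← h2', hc', hm]
end
end

section
/- Let A be an associative unital k-algebra with a symmetric Frobenius structure (Δ, ε). Then the k-linear map R₂ = (μ⊗id)∘(id⊗τ)∘(Δ⊗id) : A⊗A → A⊗A satisfies the Yang–Baxter equation: (R₂⊗id)∘(id⊗R₂)∘(R₂⊗id) = (id⊗R₂)∘(R₂⊗id)∘(id⊗R₂). -/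
open TensorProduct

noncomputable section

variable (k A : Type*) [Field k] [Ring A] [Algebra k A]

/-- `ε` is a counit for `Δ`: `(ε⊗id)∘Δ = id = (id⊗ε)∘Δ`. -/
def IsCounit (Δ : A →ₗ[k] A ⊗[k] A) (ε : A →ₗ[k] k) : Prop :=
  (TensorProduct.lid k A).toLinearMap ∘ₗ ε.rTensor A ∘ₗ Δ = LinearMap.id ∧
  (TensorProduct.rid k A).toLinearMap ∘ₗ ε.lTensor A ∘ₗ Δ = LinearMap.id

/-- The Frobenius structure `(Δ, ε)` is symmetric: `ε(xy) = ε(yx)` for all `x, y`, and the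
copairing is symmetric, `τ(Δ(1)) = Δ(1)`. -/
def IsSymmetric (Δ : A →ₗ[k] A ⊗[k] A) (ε : A →ₗ[k] k) : Prop :=
  (∀ x y : A, ε (x * y) = ε (y * x)) ∧ tau k A (Δ 1) = Δ 1

theorem ybe_aux {B : Type*} [Ring B] (c12 c13 c23 x1 x2 y1 y2 z1 : B)
    (h1 : c12 * y1 = y2 * c12) (h2 : c12 * x1 = x2 * c12) (h3 : x1 * c12 = c12 * x2)
    (h4 : c23 * c12 = c12 * c13) (h5 : x1 * y2 = y2 * x1) :
    c12 * y1 * c12 * x1 * c13 * z1 = x1 * c12 * y1 * c23 * c12 * z1 := by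
  have e1 : c12 * y1 * c12 * x1 = x1 * (c12 * y1) * c12 := by
    rw [h1, mul_assoc, h2, mul_assoc, ← mul_assoc c12, ← h3, ← mul_assoc x1, h5]
    simp only [mul_assoc]
  rw [e1]
  simp only [mul_assoc]
  rw [← mul_assoc c23, h4]
  simp only [mul_assoc]

/-- For a symmetric Frobenius structure `(Δ, ε)` on an associative unital
`k`-algebra `A`, the map `R₂ = (μ⊗id)∘(id⊗τ)∘(Δ⊗id)` satisfies the Yang–Baxter equation. -/
theorem ybe_mu_tau_comul (Δ : A →ₗ[k] A ⊗[k] A) (ε : A →ₗ[k] k)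
    (hΔ : IsFrobenius k A Δ) (hε : IsCounit k A Δ ε) (hsym : IsSymmetric k A Δ ε) :
    YBE k A ((mu k A).rTensor A ∘ₗ (asso k A).symm.toLinearMap ∘ₗ
      (tau k A).lTensor A ∘ₗ (asso k A).toLinearMap ∘ₗ Δ.rTensor A) := by
  obtain ⟨-, hF1, hF2⟩ := hΔ
  obtain ⟨-, hτ⟩ := hsym
  obtain ⟨S, hS⟩ := TensorProduct.exists_finset (Δ 1)
  have hS' : Δ 1 = ∑ p ∈ S, p.2 ⊗ₜ[k] p.1 := by
    rw [← hτ, hS]; simp [tau]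
  have d1 : ∀ x, Δ x = ∑ p ∈ S, (x * p.1) ⊗ₜ[k] p.2 := by
    intro x
    have := LinearMap.congr_fun hF1 (x ⊗ₜ 1)
    simpa [mu, asso, hS, TensorProduct.tmul_sum] using this
  have d2 : ∀ x, Δ x = ∑ p ∈ S, p.1 ⊗ₜ[k] (p.2 * x) := by
    intro x
    have := LinearMap.congr_fun hF2 (1 ⊗ₜ x)
    simpa [mu, asso, hS, TensorProduct.sum_tmul] using this
  have d2' : ∀ x, Δ x = ∑ p ∈ S, p.2 ⊗ₜ[k] (p.1 * x) := by
    intro x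
    have := LinearMap.congr_fun hF2 (1 ⊗ₜ x)
    simpa [mu, asso, hS', TensorProduct.sum_tmul] using this
  -- Casimir identities
  have k1 : ∀ x : A, (x ⊗ₜ[k] (1:A)) * Δ 1 = Δ 1 * ((1:A) ⊗ₜ[k] x) := by
    intro x
    rw [hS, Finset.mul_sum, Finset.sum_mul]
    simpa using (d1 x).symm.trans (d2 x)
  have k2 : ∀ x : A, Δ 1 * (x ⊗ₜ[k] (1:A)) = ((1:A) ⊗ₜ[k] x) * Δ 1 := by
    intro x
    have := congrArg (Algebra.TensorProduct.comm k A A) (k1 x)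
    have hc : (Algebra.TensorProduct.comm k A A) (Δ 1) = Δ 1 := hτ
    rw [map_mul, map_mul, hc] at this
    simpa using this.symm
  set R := (mu k A).rTensor A ∘ₗ (asso k A).symm.toLinearMap ∘ₗ
      (tau k A).lTensor A ∘ₗ (asso k A).toLinearMap ∘ₗ Δ.rTensor A with hR
  have r1 : ∀ x y, R (x ⊗ₜ y) = ∑ p ∈ S, (x * p.1 * y) ⊗ₜ[k] p.2 := by
    intro x y
    simp [hR, mu, asso, tau, d1 x, TensorProduct.sum_tmul]
  have r3 : ∀ x y, R (x ⊗ₜ y) = ∑ p ∈ S, (p.1 * y) ⊗ₜ[k] (p.2 * x) := by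
    intro x y
    simp [hR, mu, asso, tau, d2 x, TensorProduct.sum_tmul]
  have r2 : ∀ x y, R (x ⊗ₜ y) = ∑ p ∈ S, p.2 ⊗ₜ[k] (y * p.1 * x) := by
    intro x y
    have a : R (x ⊗ₜ y) = Δ 1 * (y ⊗ₜ[k] (1:A)) * ((1:A) ⊗ₜ[k] x) := by
      rw [r3, hS, Finset.sum_mul, Finset.sum_mul]; simp
    rw [a, k2, hS', Finset.mul_sum, Finset.sum_mul]; simp
  let i12 : A ⊗[k] A →ₐ[k] (A ⊗[k] A) ⊗[k] A := Algebra.TensorProduct.includeLeft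
  let c12 : (A ⊗[k] A) ⊗[k] A := i12 (Δ 1)
  let c13 : (A ⊗[k] A) ⊗[k] A := ∑ p ∈ S, (p.1 ⊗ₜ 1) ⊗ₜ p.2
  let c23 : (A ⊗[k] A) ⊗[k] A := ∑ p ∈ S, (1 ⊗ₜ p.1) ⊗ₜ p.2
  have hc12 : c12 = ∑ p ∈ S, (p.1 ⊗ₜ p.2) ⊗ₜ 1 := by
    simp [c12, i12, hS, TensorProduct.sum_tmul]
  have k1' : ∀ x : A, ((x ⊗ₜ[k] (1:A)) ⊗ₜ[k] (1:A)) * c12 = c12 * (((1:A) ⊗ₜ[k] x) ⊗ₜ[k] (1:A)) := by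
    intro x
    simpa [c12, i12] using congrArg i12 (k1 x)
  have k2' : ∀ x : A, c12 * ((x ⊗ₜ[k] (1:A)) ⊗ₜ[k] (1:A)) = (((1:A) ⊗ₜ[k] x) ⊗ₜ[k] (1:A)) * c12 := by
    intro x
    simpa [c12, i12] using congrArg i12 (k2 x)
  have h4 : c23 * c12 = c12 * c13 := by
    simp only [c23, c13, Finset.sum_mul, Finset.mul_sum]
    refine Finset.sum_congr rfl fun p _ => ?_
    have e1 : ((1:A) ⊗ₜ[k] p.1) ⊗ₜ[k] p.2
        = (((1:A) ⊗ₜ[k] (1:A)) ⊗ₜ[k] p.2) * (((1:A) ⊗ₜ[k] p.1) ⊗ₜ[k] (1:A)) := by simp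
    have e3 : (((1:A) ⊗ₜ[k] (1:A)) ⊗ₜ[k] p.2) * c12 = c12 * (((1:A) ⊗ₜ[k] (1:A)) ⊗ₜ[k] p.2) := by
      rw [hc12, Finset.sum_mul, Finset.mul_sum]; simp
    have e4 : (p.1 ⊗ₜ[k] (1:A)) ⊗ₜ[k] p.2
        = (((1:A) ⊗ₜ[k] (1:A)) ⊗ₜ[k] p.2) * ((p.1 ⊗ₜ[k] (1:A)) ⊗ₜ[k] (1:A)) := by simp
    rw [e1, e4, mul_assoc, ← k2', ← mul_assoc, e3, mul_assoc]
  unfold YBE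
  apply TensorProduct.ext_threefold
  intro x y z
  have key := ybe_aux c12 c13 c23 ((x ⊗ₜ[k] (1:A)) ⊗ₜ[k] (1:A)) ((1 ⊗ₜ[k] x) ⊗ₜ[k] (1:A))
    ((y ⊗ₜ[k] (1:A)) ⊗ₜ[k] (1:A)) ((1 ⊗ₜ[k] y) ⊗ₜ[k] (1:A)) ((z ⊗ₜ[k] (1:A)) ⊗ₜ[k] (1:A))
    (k2' y) (k2' x) (k1' x) h4 (by simp)
  have L : (R.rTensor A ∘ₗ
      ((asso k A).symm.toLinearMap ∘ₗ R.lTensor A ∘ₗ (asso k A).toLinearMap) ∘ₗ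
      R.rTensor A) ((x ⊗ₜ[k] y) ⊗ₜ[k] z) = ∑ p ∈ S, ∑ q ∈ S, ∑ r ∈ S,
        ((r.1 * (y * p.1 * x * q.1 * z)) ⊗ₜ[k] (r.2 * p.2)) ⊗ₜ[k] q.2 := by
    simp only [LinearMap.comp_apply, LinearMap.rTensor_tmul, LinearEquiv.coe_coe]
    rw [r2]
    simp only [TensorProduct.sum_tmul, TensorProduct.tmul_sum, map_sum, asso,
      TensorProduct.assoc_tmul, TensorProduct.assoc_symm_tmul, LinearMap.lTensor_tmul, r1]
    simp only [LinearMap.rTensor_tmul, r3, TensorProduct.sum_tmul]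
  have Rr : (((asso k A).symm.toLinearMap ∘ₗ R.lTensor A ∘ₗ (asso k A).toLinearMap) ∘ₗ
      R.rTensor A ∘ₗ
      ((asso k A).symm.toLinearMap ∘ₗ R.lTensor A ∘ₗ (asso k A).toLinearMap))
        ((x ⊗ₜ[k] y) ⊗ₜ[k] z) = ∑ p ∈ S, ∑ q ∈ S, ∑ r ∈ S,
        ((x * q.1 * (y * p.1 * z)) ⊗ₜ[k] (q.2 * r.1 * p.2)) ⊗ₜ[k] r.2 := by
    simp only [TensorProduct.sum_tmul, TensorProduct.tmul_sum, map_sum, asso,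
      TensorProduct.assoc_tmul, TensorProduct.assoc_symm_tmul, LinearMap.lTensor_tmul, r1,
      LinearMap.rTensor_tmul, LinearMap.comp_apply, LinearEquiv.coe_coe]
  rw [L, Rr]
  have EL : c12 * ((y ⊗ₜ[k] (1:A)) ⊗ₜ[k] (1:A)) * c12 * ((x ⊗ₜ[k] (1:A)) ⊗ₜ[k] (1:A)) * c13 *
      ((z ⊗ₜ[k] (1:A)) ⊗ₜ[k] (1:A)) = ∑ p ∈ S, ∑ q ∈ S, ∑ r ∈ S,
        ((r.1 * (y * p.1 * x * q.1 * z)) ⊗ₜ[k] (r.2 * p.2)) ⊗ₜ[k] q.2 := by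
    rw [hc12]
    simp only [c13, Finset.sum_mul, Finset.mul_sum, Algebra.TensorProduct.tmul_mul_tmul, mul_one,
      one_mul, mul_assoc]
    rw [Finset.sum_comm]
  have ER : ((x ⊗ₜ[k] (1:A)) ⊗ₜ[k] (1:A)) * c12 * ((y ⊗ₜ[k] (1:A)) ⊗ₜ[k] (1:A)) * c23 * c12 *
      ((z ⊗ₜ[k] (1:A)) ⊗ₜ[k] (1:A)) = ∑ p ∈ S, ∑ q ∈ S, ∑ r ∈ S,
        ((x * q.1 * (y * p.1 * z)) ⊗ₜ[k] (q.2 * r.1 * p.2)) ⊗ₜ[k] r.2 := by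
    rw [hc12]
    simp only [c23, Finset.sum_mul, Finset.mul_sum, Algebra.TensorProduct.tmul_mul_tmul, mul_one,
      one_mul, mul_assoc]
    refine Finset.sum_congr rfl fun p _ => ?_
    rw [Finset.sum_comm]
  rw [← EL, ← ER, key]
end
end

section
/- (D₂∘D₁ = 0.) Let A be an associative unital k-algebra with a Frobenius structure Δ. For every k-linear map h : A → A, put φ₁ = d^{1,1}(h) and φ₂ = −d^{1,2}(h). Then d^{2,1}(φ₁) = 0, d^{2,2}_{(1)}(φ₁,φ₂) = 0, d^{2,2}_{(2)}(φ₁,φ₂) = 0, and d^{2,3}(φ₂) = 0; that is, D₂^{(i)}∘D₁ = 0 for both choices i = 1, 2 of the second differential. -/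
open TensorProduct

noncomputable section

variable (k A : Type*) [Field k] [Ring A] [Algebra k A]

/-- `d^{1,1}(h) = μ∘(h⊗id) + μ∘(id⊗h) − h∘μ`. -/
def d11 (h : A →ₗ[k] A) : A ⊗[k] A →ₗ[k] A :=
  mu k A ∘ₗ h.rTensor A + mu k A ∘ₗ h.lTensor A - h ∘ₗ mu k A

/-- `d^{1,2}(h) = (h⊗id)∘Δ + (id⊗h)∘Δ − Δ∘h`. -/
def d12 (Δ : A →ₗ[k] A ⊗[k] A) (h : A →ₗ[k] A) : A →ₗ[k] A ⊗[k] A :=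
  h.rTensor A ∘ₗ Δ + h.lTensor A ∘ₗ Δ - Δ ∘ₗ h

/-- `d^{2,1}(φ₁) = μ∘(φ₁⊗id) + φ₁∘(μ⊗id) − μ∘(id⊗φ₁) − φ₁∘(id⊗μ)`. -/
def d21 (φ₁ : A ⊗[k] A →ₗ[k] A) : ((A ⊗[k] A) ⊗[k] A) →ₗ[k] A :=
  mu k A ∘ₗ φ₁.rTensor A + φ₁ ∘ₗ (mu k A).rTensor A
  - mu k A ∘ₗ φ₁.lTensor A ∘ₗ (asso k A).toLinearMap
  - φ₁ ∘ₗ (mu k A).lTensor A ∘ₗ (asso k A).toLinearMap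

/-- `d^{2,2}_{(1)}(φ₁,φ₂) = Δ∘φ₁ + φ₂∘μ − (φ₁⊗id)∘(id⊗Δ) − (μ⊗id)∘(id⊗φ₂)`. -/
def d221 (Δ : A →ₗ[k] A ⊗[k] A) (φ₁ : A ⊗[k] A →ₗ[k] A) (φ₂ : A →ₗ[k] A ⊗[k] A) :
    A ⊗[k] A →ₗ[k] A ⊗[k] A :=
  Δ ∘ₗ φ₁ + φ₂ ∘ₗ mu k A
  - φ₁.rTensor A ∘ₗ (asso k A).symm.toLinearMap ∘ₗ Δ.lTensor A
  - (mu k A).rTensor A ∘ₗ (asso k A).symm.toLinearMap ∘ₗ φ₂.lTensor A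

/-- `d^{2,2}_{(2)}(φ₁,φ₂) = Δ∘φ₁ + φ₂∘μ − (id⊗φ₁)∘(Δ⊗id) − (id⊗μ)∘(φ₂⊗id)`. -/
def d222 (Δ : A →ₗ[k] A ⊗[k] A) (φ₁ : A ⊗[k] A →ₗ[k] A) (φ₂ : A →ₗ[k] A ⊗[k] A) :
    A ⊗[k] A →ₗ[k] A ⊗[k] A :=
  Δ ∘ₗ φ₁ + φ₂ ∘ₗ mu k A
  - φ₁.lTensor A ∘ₗ (asso k A).toLinearMap ∘ₗ Δ.rTensor A
  - (mu k A).lTensor A ∘ₗ (asso k A).toLinearMap ∘ₗ φ₂.rTensor A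

/-- `d^{2,3}(φ₂) = (φ₂⊗id)∘Δ + (Δ⊗id)∘φ₂ − (id⊗φ₂)∘Δ − (id⊗Δ)∘φ₂`. -/
def d23 (Δ : A →ₗ[k] A ⊗[k] A) (φ₂ : A →ₗ[k] A ⊗[k] A) :
    A →ₗ[k] (A ⊗[k] A) ⊗[k] A :=
  φ₂.rTensor A ∘ₗ Δ + Δ.rTensor A ∘ₗ φ₂
  - (asso k A).symm.toLinearMap ∘ₗ φ₂.lTensor A ∘ₗ Δ
  - (asso k A).symm.toLinearMap ∘ₗ Δ.lTensor A ∘ₗ φ₂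

/-- `D₂∘D₁ = 0`: for every `k`-linear `h : A → A`, the pair
`(φ₁, φ₂) = (d^{1,1}(h), −d^{1,2}(h)) = D₁(h)` satisfies all four second-differential
conditions, i.e. `D₂^{(i)}∘D₁ = 0` for `i = 1, 2`. -/
theorem D2_comp_D1_eq_zero (Δ : A →ₗ[k] A ⊗[k] A) (hΔ : IsFrobenius k A Δ)
    (h : A →ₗ[k] A) :
    d21 k A (d11 k A h) = 0 ∧
    d221 k A Δ (d11 k A h) (-(d12 k A Δ h)) = 0 ∧
    d222 k A Δ (d11 k A h) (-(d12 k A Δ h)) = 0 ∧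
    d23 k A Δ (-(d12 k A Δ h)) = 0 := by
  obtain ⟨hc, h1, h2⟩ := hΔ
  refine ⟨?_, ?_, ?_, ?_⟩
  · ext x y z
    simp [d21, d11, mu, asso, mul_assoc, sub_mul, add_mul, mul_sub, mul_add]
    abel
  · have key1 : ∀ (x : A) (t : A ⊗[k] A),
        (d11 k A h).rTensor A ((asso k A).symm (x ⊗ₜ t)) =
          (mu k A).rTensor A ((asso k A).symm (h x ⊗ₜ t))
          + (mu k A).rTensor A ((asso k A).symm (x ⊗ₜ h.rTensor A t))
          - h.rTensor A ((mu k A).rTensor A ((asso k A).symm (x ⊗ₜ t))) := by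
      intro x t
      induction t with
      | zero => simp
      | tmul a b => simp [d11, mu, asso, TensorProduct.add_tmul, TensorProduct.sub_tmul]
      | add s t hs ht =>
        simp only [TensorProduct.tmul_add, map_add, hs, ht]
        abel
    have key2 : ∀ (x : A) (t : A ⊗[k] A),
        (mu k A).rTensor A ((asso k A).symm (x ⊗ₜ h.lTensor A t)) =
          h.lTensor A ((mu k A).rTensor A ((asso k A).symm (x ⊗ₜ t))) := by
      intro x t
      induction t with
      | zero => simp
      | tmul a b => simp [mu, asso]
      | add s t hs ht =>
        simp only [TensorProduct.tmul_add, map_add, hs, ht]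
    have h1' : ∀ x y : A, Δ (x * y) =
        (mu k A).rTensor A ((asso k A).symm (x ⊗ₜ Δ y)) := by
      intro x y
      simpa [mu] using LinearMap.congr_fun h1 (x ⊗ₜ y)
    refine TensorProduct.ext' fun x y => ?_
    have e1 : d11 k A h (x ⊗ₜ y) = h x * y + x * h y - h (x * y) := by simp [d11, mu]
    have e2 : mu k A (x ⊗ₜ y) = x * y := by simp [mu]
    simp only [d221, LinearMap.sub_apply, LinearMap.add_apply, LinearMap.comp_apply,
      LinearMap.lTensor_tmul, LinearEquiv.coe_coe, key1, e1, e2, LinearMap.neg_apply, d12,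
      TensorProduct.tmul_neg, TensorProduct.tmul_add, TensorProduct.tmul_sub, map_add,
      map_sub, map_neg, key2, ← h1', LinearMap.zero_apply]
    abel
  · have key1 : ∀ (x : A) (t : A ⊗[k] A),
        (d11 k A h).lTensor A ((asso k A) (t ⊗ₜ x)) =
          (mu k A).lTensor A ((asso k A) (t ⊗ₜ h x))
          + (mu k A).lTensor A ((asso k A) (h.lTensor A t ⊗ₜ x))
          - h.lTensor A ((mu k A).lTensor A ((asso k A) (t ⊗ₜ x))) := by
      intro x t
      induction t with
      | zero => simp
      | tmul a b =>
        simp [d11, mu, asso, TensorProduct.tmul_add, TensorProduct.tmul_sub]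
        abel
      | add s t hs ht =>
        simp only [TensorProduct.add_tmul, map_add, hs, ht]
        abel
    have key2 : ∀ (x : A) (t : A ⊗[k] A),
        (mu k A).lTensor A ((asso k A) (h.rTensor A t ⊗ₜ x)) =
          h.rTensor A ((mu k A).lTensor A ((asso k A) (t ⊗ₜ x))) := by
      intro x t
      induction t with
      | zero => simp
      | tmul a b => simp [mu, asso]
      | add s t hs ht =>
        simp only [TensorProduct.add_tmul, map_add, hs, ht]
    have h2' : ∀ x y : A, Δ (x * y) =
        (mu k A).lTensor A ((asso k A) (Δ x ⊗ₜ y)) := by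
      intro x y
      simpa [mu] using LinearMap.congr_fun h2 (x ⊗ₜ y)
    refine TensorProduct.ext' fun x y => ?_
    have e1 : d11 k A h (x ⊗ₜ y) = h x * y + x * h y - h (x * y) := by simp [d11, mu]
    have e2 : mu k A (x ⊗ₜ y) = x * y := by simp [mu]
    simp only [d222, LinearMap.sub_apply, LinearMap.add_apply, LinearMap.comp_apply,
      LinearMap.rTensor_tmul, LinearEquiv.coe_coe, key1, e1, e2, LinearMap.neg_apply, d12,
      TensorProduct.neg_tmul, TensorProduct.add_tmul, TensorProduct.sub_tmul, map_add,
      map_sub, map_neg, key2, ← h2', LinearMap.zero_apply]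
    abel
  · -- the three placements of `h` on the triple tensor power
    have a1 : ∀ t : A ⊗[k] A, (asso k A).symm (h.rTensor (A ⊗[k] A) (Δ.lTensor A t)) =
        (h.rTensor A).rTensor A ((asso k A).symm (Δ.lTensor A t)) := by
      intro t
      generalize Δ.lTensor A t = u
      have : (asso k A).symm.toLinearMap ∘ₗ h.rTensor (A ⊗[k] A) =
          (h.rTensor A).rTensor A ∘ₗ (asso k A).symm.toLinearMap := by
        ext x y z
        simp [asso]
      exact LinearMap.congr_fun this u
    have a2 : ∀ u, (asso k A).symm ((h.rTensor A).lTensor A u) =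
        (h.lTensor A).rTensor A ((asso k A).symm u) := by
      intro u
      have : (asso k A).symm.toLinearMap ∘ₗ (h.rTensor A).lTensor A =
          (h.lTensor A).rTensor A ∘ₗ (asso k A).symm.toLinearMap := by
        ext x y z
        simp [asso]
      exact LinearMap.congr_fun this u
    have a3 : ∀ u, (asso k A).symm ((h.lTensor A).lTensor A u) =
        h.lTensor (A ⊗[k] A) ((asso k A).symm u) := by
      intro u
      have : (asso k A).symm.toLinearMap ∘ₗ (h.lTensor A).lTensor A =
          h.lTensor (A ⊗[k] A) ∘ₗ (asso k A).symm.toLinearMap := by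
        ext x y z
        simp [asso]
      exact LinearMap.congr_fun this u
    have b1 : ∀ t : A ⊗[k] A, Δ.rTensor A (h.lTensor A t) =
        h.lTensor (A ⊗[k] A) (Δ.rTensor A t) := by
      intro t
      have : Δ.rTensor A ∘ₗ h.lTensor A = h.lTensor (A ⊗[k] A) ∘ₗ Δ.rTensor A := by
        rw [LinearMap.rTensor_comp_lTensor, LinearMap.lTensor_comp_rTensor]
      exact LinearMap.congr_fun this t
    have b2 : ∀ t : A ⊗[k] A, Δ.lTensor A (h.rTensor A t) =
        h.rTensor (A ⊗[k] A) (Δ.lTensor A t) := by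
      intro t
      have : Δ.lTensor A ∘ₗ h.rTensor A = h.rTensor (A ⊗[k] A) ∘ₗ Δ.lTensor A := by
        rw [LinearMap.rTensor_comp_lTensor, LinearMap.lTensor_comp_rTensor]
      exact LinearMap.congr_fun this t
    have hc' : ∀ x, (asso k A).symm (Δ.lTensor A (Δ x)) = Δ.rTensor A (Δ x) :=
      fun x => (LinearMap.congr_fun hc x).symm
    refine LinearMap.ext fun x => ?_
    simp only [d23, d12, LinearMap.rTensor_neg, LinearMap.lTensor_neg, LinearMap.rTensor_sub,
      LinearMap.lTensor_sub, LinearMap.rTensor_add, LinearMap.lTensor_add,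
      LinearMap.rTensor_comp, LinearMap.lTensor_comp,
      LinearMap.sub_apply, LinearMap.add_apply, LinearMap.comp_apply, LinearMap.neg_apply,
      LinearEquiv.coe_coe, map_add, map_sub, map_neg, b1, b2, a1, a2, a3, hc',
      LinearMap.zero_apply]
    abel
end
end

section
/- (The d^{3,2}-component of D₃∘D₂ = 0.) Let A be an associative unital k-algebra with a Frobenius structure Δ. For all k-linear maps φ₁ : A⊗A → A and φ₂ : A → A⊗A, put ξ₁ = d^{2,1}(φ₁) and ξ₂ = d^{2,2}_{(1)}(φ₁,φ₂). Then d^{3,2}(ξ₁,ξ₂) = Δ∘ξ₁ + ξ₂∘(id⊗μ) + (μ⊗id)∘(id⊗ξ₂) − ξ₂∘(μ⊗id) − (ξ₁⊗id)∘(id⊗id⊗Δ) = 0 as a map A⊗A⊗A → A⊗A. -/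
open TensorProduct

noncomputable section

variable (k A : Type*) [Field k] [Ring A] [Algebra k A]

/-- Associator `((A⊗A)⊗A)⊗A ≃ A⊗((A⊗A)⊗A)` moving the first factor outside. -/
def asso4 : (((A ⊗[k] A) ⊗[k] A) ⊗[k] A) ≃ₗ[k] (A ⊗[k] ((A ⊗[k] A) ⊗[k] A)) :=
  (TensorProduct.assoc k (A ⊗[k] A) A A) ≪≫ₗ (TensorProduct.assoc k A A (A ⊗[k] A)) ≪≫ₗ
    (TensorProduct.congr (LinearEquiv.refl k A) (TensorProduct.assoc k A A A).symm)

/-- `d^{3,1}(ξ₁) = μ∘(ξ₁⊗id) + ξ₁∘(id⊗μ⊗id) + μ∘(id⊗ξ₁) − ξ₁∘(μ⊗id⊗id) − ξ₁∘(id⊗id⊗μ)`. -/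
def d31 (ξ₁ : (A ⊗[k] A) ⊗[k] A →ₗ[k] A) :
    (((A ⊗[k] A) ⊗[k] A) ⊗[k] A) →ₗ[k] A :=
  mu k A ∘ₗ ξ₁.rTensor A
  + ξ₁ ∘ₗ (((mu k A).lTensor A ∘ₗ (asso k A).toLinearMap).rTensor A)
  + mu k A ∘ₗ ξ₁.lTensor A ∘ₗ (asso4 k A).toLinearMap
  - ξ₁ ∘ₗ ((mu k A).rTensor A).rTensor A
  - ξ₁ ∘ₗ (mu k A).lTensor (A ⊗[k] A) ∘ₗ (TensorProduct.assoc k (A ⊗[k] A) A A).toLinearMap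

/-- `d^{3,2}(ξ₁,ξ₂) = Δ∘ξ₁ + ξ₂∘(id⊗μ) + (μ⊗id)∘(id⊗ξ₂) − ξ₂∘(μ⊗id) − (ξ₁⊗id)∘(id⊗id⊗Δ)`. -/
def d32 (Δ : A →ₗ[k] A ⊗[k] A) (ξ₁ : (A ⊗[k] A) ⊗[k] A →ₗ[k] A)
    (ξ₂ : A ⊗[k] A →ₗ[k] A ⊗[k] A) : ((A ⊗[k] A) ⊗[k] A) →ₗ[k] A ⊗[k] A :=
  Δ ∘ₗ ξ₁
  + ξ₂ ∘ₗ (mu k A).lTensor A ∘ₗ (asso k A).toLinearMap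
  + (mu k A).rTensor A ∘ₗ (asso k A).symm.toLinearMap ∘ₗ ξ₂.lTensor A ∘ₗ (asso k A).toLinearMap
  - ξ₂ ∘ₗ (mu k A).rTensor A
  - ξ₁.rTensor A ∘ₗ (TensorProduct.assoc k (A ⊗[k] A) A A).symm.toLinearMap ∘ₗ
      Δ.lTensor (A ⊗[k] A)

/-- `d^{3,3}(ξ₂,ξ₃) = ξ₃∘μ + (id⊗Δ)∘ξ₂ + (id⊗ξ₂)∘(Δ⊗id) − (Δ⊗id)∘ξ₂ − (id⊗id⊗μ)∘(ξ₃⊗id)`. -/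
def d33 (Δ : A →ₗ[k] A ⊗[k] A) (ξ₂ : A ⊗[k] A →ₗ[k] A ⊗[k] A)
    (ξ₃ : A →ₗ[k] (A ⊗[k] A) ⊗[k] A) : A ⊗[k] A →ₗ[k] (A ⊗[k] A) ⊗[k] A :=
  ξ₃ ∘ₗ mu k A
  + (asso k A).symm.toLinearMap ∘ₗ Δ.lTensor A ∘ₗ ξ₂
  + (asso k A).symm.toLinearMap ∘ₗ ξ₂.lTensor A ∘ₗ (asso k A).toLinearMap ∘ₗ Δ.rTensor A
  - Δ.rTensor A ∘ₗ ξ₂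
  - (mu k A).lTensor (A ⊗[k] A) ∘ₗ (TensorProduct.assoc k (A ⊗[k] A) A A).toLinearMap ∘ₗ
      ξ₃.rTensor A

/-- `d^{4,2}(ζ₁,ζ₂) = Δ∘ζ₁ + ζ₂∘(id⊗id⊗μ) + (μ⊗id)∘(id⊗ζ₂)
  − (ζ₁⊗id)∘(id⊗id⊗id⊗Δ) − ζ₂∘(μ⊗id⊗id) − ζ₂∘(id⊗μ⊗id)`. -/
def d42 (Δ : A →ₗ[k] A ⊗[k] A) (ζ₁ : ((A ⊗[k] A) ⊗[k] A) ⊗[k] A →ₗ[k] A)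
    (ζ₂ : (A ⊗[k] A) ⊗[k] A →ₗ[k] A ⊗[k] A) :
    (((A ⊗[k] A) ⊗[k] A) ⊗[k] A) →ₗ[k] A ⊗[k] A :=
  Δ ∘ₗ ζ₁
  + ζ₂ ∘ₗ (mu k A).lTensor (A ⊗[k] A) ∘ₗ (TensorProduct.assoc k (A ⊗[k] A) A A).toLinearMap
  + (mu k A).rTensor A ∘ₗ (asso k A).symm.toLinearMap ∘ₗ ζ₂.lTensor A ∘ₗ (asso4 k A).toLinearMap
  - ζ₁.rTensor A ∘ₗ (TensorProduct.assoc k ((A ⊗[k] A) ⊗[k] A) A A).symm.toLinearMap ∘ₗ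
      Δ.lTensor ((A ⊗[k] A) ⊗[k] A)
  - ζ₂ ∘ₗ ((mu k A).rTensor A).rTensor A
  - ζ₂ ∘ₗ (((mu k A).lTensor A ∘ₗ (asso k A).toLinearMap).rTensor A)

/-- Associativity of the left action of `A` on `A ⊗ A`. -/
lemma aux_mu_mu (x y : A) (T : A ⊗[k] A) :
    (mu k A).rTensor A ((asso k A).symm (x ⊗ₜ (mu k A).rTensor A ((asso k A).symm (y ⊗ₜ T)))) =
      (mu k A).rTensor A ((asso k A).symm ((x * y) ⊗ₜ T)) := by
  induction T with
  | zero => simp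
  | add a b ha hb => simp only [tmul_add, map_add, ha, hb]
  | tmul a b => simp [mu, asso, mul_assoc]

/-- The map `d21 φ₁ ⊗ id` evaluated on `x ⊗ y ⊗ T`. -/
lemma aux_d21 (φ₁ : A ⊗[k] A →ₗ[k] A) (x y : A) (T : A ⊗[k] A) :
    (d21 k A φ₁).rTensor A ((TensorProduct.assoc k (A ⊗[k] A) A A).symm ((x ⊗ₜ y) ⊗ₜ T)) =
      (mu k A).rTensor A ((asso k A).symm (φ₁ (x ⊗ₜ y) ⊗ₜ T))
      + φ₁.rTensor A ((asso k A).symm ((x * y) ⊗ₜ T))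
      - (mu k A).rTensor A ((asso k A).symm
          (x ⊗ₜ φ₁.rTensor A ((asso k A).symm (y ⊗ₜ T))))
      - φ₁.rTensor A ((asso k A).symm
          (x ⊗ₜ (mu k A).rTensor A ((asso k A).symm (y ⊗ₜ T)))) := by
  induction T with
  | zero => simp
  | add a b ha hb => simp only [tmul_add, map_add, ha, hb]; abel
  | tmul a b => simp [d21, mu, asso, add_tmul, sub_tmul]

/-- the `d^{3,2}`-component of `D₃∘D₂ = 0`: for all `k`-linear maps
`φ₁ : A⊗A → A` and `φ₂ : A → A⊗A`, with `ξ₁ = d^{2,1}(φ₁)` and `ξ₂ = d^{2,2}_{(1)}(φ₁,φ₂)`,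
one has `d^{3,2}(ξ₁,ξ₂) = 0`. -/
theorem d32_comp_D2_eq_zero (Δ : A →ₗ[k] A ⊗[k] A) (hΔ : IsFrobenius k A Δ)
    (φ₁ : A ⊗[k] A →ₗ[k] A) (φ₂ : A →ₗ[k] A ⊗[k] A) :
    d32 k A Δ (d21 k A φ₁) (d221 k A Δ φ₁ φ₂) = 0 := by
  have hF : ∀ a b : A, Δ (a * b) =
      (mu k A).rTensor A ((asso k A).symm (a ⊗ₜ Δ b)) := fun a b => by
    simpa [mu] using LinearMap.congr_fun hΔ.2.1 (a ⊗ₜ b)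
  have hmu : ∀ a b : A, mu k A (a ⊗ₜ b) = a * b := fun a b => by simp [mu]
  have has : ∀ a b c : A, asso k A ((a ⊗ₜ b) ⊗ₜ c) = a ⊗ₜ (b ⊗ₜ c) := fun a b c => by simp [asso]
  apply TensorProduct.ext_threefold
  intro x y z
  simp only [d32, LinearMap.sub_apply, LinearMap.add_apply, LinearMap.comp_apply,
    LinearEquiv.coe_coe, LinearMap.rTensor_tmul, LinearMap.lTensor_tmul, aux_d21,
    LinearMap.zero_apply, hmu, has]
  simp only [d21, d221, LinearMap.sub_apply, LinearMap.add_apply, LinearMap.comp_apply,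
    LinearEquiv.coe_coe, LinearMap.rTensor_tmul, LinearMap.lTensor_tmul,
    hmu, has, map_add, map_sub, tmul_add, tmul_sub, aux_mu_mu, hF, mul_assoc]
  abel
end
end

section
/- Let A be a finite-dimensional associative unital k-algebra (k a field, with 1_A ≠ 0) with a Frobenius structure Δ, and suppose that Δ(1) = 1⊗x + x⊗1 for some x ∈ A. If h : A → A is a k-linear map with d^{1,1}(h) = 0 and d^{1,2}(h) = 0 (i.e., h ∈ Z¹_f(A;A)), then there exists α ∈ k with h(x) = α·1 and 2α = 0. In particular h(x) = 0 when char(k) ≠ 2. -/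
open TensorProduct

noncomputable section

variable (k A : Type*) [Field k] [Ring A] [Algebra k A]

/-- let `A` be a finite-dimensional `k`-algebra with `1 ≠ 0` carrying a Frobenius
structure `Δ`, and suppose `Δ(1) = 1⊗x + x⊗1`. If `h` is a Frobenius 1-cocycle
(`d^{1,1}(h) = 0` and `d^{1,2}(h) = 0`), then `h(x) = α·1` for some `α ∈ k` with `2α = 0`;
in particular `h(x) = 0` when `char k ≠ 2`. -/
theorem one_cocycle_on_copairing (Δ : A →ₗ[k] A ⊗[k] A) (hΔ : IsFrobenius k A Δ)
    [FiniteDimensional k A] [Nontrivial A]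
    (x : A) (hx : Δ 1 = (1 : A) ⊗ₜ[k] x + x ⊗ₜ[k] (1 : A))
    (h : A →ₗ[k] A) (h1 : d11 k A h = 0) (h2 : d12 k A Δ h = 0) :
    (∃ α : k, h x = α • (1 : A) ∧ 2 * α = 0) ∧ (ringChar k ≠ 2 → h x = 0) := by
  have e1 : h 1 = 0 := by
    have := LinearMap.congr_fun h1 ((1 : A) ⊗ₜ[k] (1 : A))
    simpa [d11, mu] using this
  have e2 : (1 : A) ⊗ₜ[k] h x + h x ⊗ₜ[k] (1 : A) = 0 := by
    have := LinearMap.congr_fun h2 (1 : A)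
    simpa [d12, hx, e1, add_comm] using this
  obtain ⟨f, hf⟩ := Module.Projective.exists_dual_ne_zero k (one_ne_zero : (1 : A) ≠ 0)
  have e3 : f 1 • h x + f (h x) • (1 : A) = 0 := by
    have := congrArg (fun t => TensorProduct.lid k A (f.rTensor A t)) e2
    simpa using this
  have e4 : h x = (-((f 1)⁻¹ * f (h x))) • (1 : A) := by
    have := congrArg (fun t => (f 1)⁻¹ • t) e3
    simp only [smul_add, smul_smul, inv_mul_cancel₀ hf, one_smul, smul_zero] at this
    rw [neg_smul]
    exact eq_neg_of_add_eq_zero_left this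
  have e5 : 2 * (-((f 1)⁻¹ * f (h x))) = 0 := by
    have := congrArg f e3
    simp only [map_add, map_smul, smul_eq_mul, map_zero] at this
    have e6 : 2 * f (h x) = 0 := by
      have e7 : f 1 * (2 * f (h x)) = 0 := by linear_combination this
      exact (mul_eq_zero.mp e7).resolve_left hf
    linear_combination (-(f 1)⁻¹) * e6
  refine ⟨⟨_, e4, e5⟩, fun hc => ?_⟩
  have h20 : (2 : k) ≠ 0 := Ring.two_ne_zero hc
  rw [e4, (mul_eq_zero.mp e5).resolve_left h20, zero_smul]
end
end

section
/- For the Frobenius algebra ℂ over ℝ with trigonometric comultiplication, the space of Frobenius 1-cocycles is trivial: if h : ℂ → ℂ is ℝ-linear and satisfies d^{1,1}(h) = 0 and d^{1,2}(h) = 0, then h = 0. In particular Z¹_f(ℂ;ℂ) = 0 and H¹_f(ℂ;ℂ) = 0. -/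
open TensorProduct

noncomputable section

variable (k A : Type*) [Field k] [Ring A] [Algebra k A]

/-- for the Frobenius algebra `ℂ` over `ℝ` with the trigonometric
comultiplication (`Δ(1) = 1⊗1 − i⊗i`, `Δ(i) = i⊗1 + 1⊗i`), every Frobenius 1-cocycle
vanishes: `Z¹_f(ℂ;ℂ) = 0` (hence `H¹_f(ℂ;ℂ) = 0`). -/
theorem complex_Z1_trivial (Δ : ℂ →ₗ[ℝ] ℂ ⊗[ℝ] ℂ)
    (hΔ1 : Δ 1 = (1 : ℂ) ⊗ₜ[ℝ] (1 : ℂ) - Complex.I ⊗ₜ[ℝ] Complex.I)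
    (hΔi : Δ Complex.I = Complex.I ⊗ₜ[ℝ] (1 : ℂ) + (1 : ℂ) ⊗ₜ[ℝ] Complex.I)
    (h : ℂ →ₗ[ℝ] ℂ) (h1 : d11 ℝ ℂ h = 0) (h2 : d12 ℝ ℂ Δ h = 0) :
    h = 0 := by
  have e : ∀ x y : ℂ, h x * y + x * h y - h (x * y) = 0 := by
    intro x y
    have := LinearMap.congr_fun h1 (x ⊗ₜ[ℝ] y)
    simpa [d11, mu] using this
  have a1 : h 1 = 0 := by
    have := e 1 1
    simpa using this
  have neg1 : h (-1) = 0 := by rw [map_neg, a1, neg_zero]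
  have aI : h Complex.I = 0 := by
    have := e Complex.I Complex.I
    rw [Complex.I_mul_I, neg1, sub_zero, mul_comm, ← two_mul] at this
    simpa using this
  apply Complex.basisOneI.ext
  intro i
  fin_cases i
  · simpa using a1
  · simpa using aI
end
end

section
/- For the Frobenius algebra A = k[x]/(x²) over a field k, the space of Frobenius 1-cocycles Z¹_f(A;A) = {h : d^{1,1}(h)=0 and d^{1,2}(h)=0} has dimension 0 over k if char(k) ≠ 2, and dimension 1 over k if char(k) = 2 (in that case it is spanned by the k-linear map h with h(1) = 0 and h(x) = 1). In particular H¹_f(A;A) = 0 if char(k) ≠ 2 and H¹_f(A;A) ≅ k if char(k) = 2. -/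
open TensorProduct

noncomputable section

variable (k A : Type*) [Field k] [Ring A] [Algebra k A]

theorem dual_ext (K : Type*) [Field K] {M : Type*} [AddCommGroup M] [Module K M]
    (f g : DualNumber K →ₗ[K] M) (h1 : f 1 = g 1)
    (hx : f DualNumber.eps = g DualNumber.eps) : f = g := by
  apply LinearMap.ext
  intro y
  have hy : y = y.fst • (1 : DualNumber K) + y.snd • (DualNumber.eps : DualNumber K) := by
    ext <;> simp
  rw [hy, map_add, map_add, map_smul, map_smul, map_smul, map_smul, h1, hx]

theorem dual_aux (K : Type*) [Field K]
    (Δ : DualNumber K →ₗ[K] DualNumber K ⊗[K] DualNumber K)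
    (hΔ1 : Δ 1 = (1 : DualNumber K) ⊗ₜ[K] (DualNumber.eps : DualNumber K) +
      (DualNumber.eps : DualNumber K) ⊗ₜ[K] (1 : DualNumber K))
    (h : DualNumber K →ₗ[K] DualNumber K)
    (e1 : d11 K (DualNumber K) h = 0) (e2 : d12 K (DualNumber K) Δ h = 0) :
    h 1 = 0 ∧ TrivSqZeroExt.snd (h DualNumber.eps) = 0 ∧
      2 * TrivSqZeroExt.fst (h DualNumber.eps) = 0 := by
  have a : h 1 = 0 := by
    have := LinearMap.congr_fun e1 (1 ⊗ₜ 1)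
    simpa [d11, mu] using this
  refine ⟨a, ?_, ?_⟩
  · have := LinearMap.congr_fun e2 1
    simp only [d12, LinearMap.sub_apply, LinearMap.add_apply, LinearMap.comp_apply, hΔ1, a,
      map_add, map_zero, LinearMap.rTensor_tmul, LinearMap.lTensor_tmul,
      TensorProduct.zero_tmul, TensorProduct.tmul_zero, LinearMap.zero_apply] at this
    have := congrArg (LinearMap.mul' K K ∘ₗ TensorProduct.map
      (TrivSqZeroExt.fstHom K K K).toLinearMap (TrivSqZeroExt.sndHom K K)) this
    simpa using this
  · have := LinearMap.congr_fun e1 (DualNumber.eps ⊗ₜ DualNumber.eps)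
    have := congrArg TrivSqZeroExt.snd this
    simp [d11, mu] at this
    rw [two_mul]
    simpa using this

/-- for the Frobenius algebra `A = k[x]/(x²)` (the dual numbers, with
`Δ(1) = 1⊗x + x⊗1`, `Δ(x) = x⊗x` where `x = ε`), the space of Frobenius 1-cocycles
is `0` if `char k ≠ 2`, and is 1-dimensional, spanned by the map `h₀` with `h₀(1) = 0`,
`h₀(x) = 1`, if `char k = 2` (hence `H¹_f = 0` resp. `H¹_f ≅ k`). -/
theorem dualNumber_Z1 (K : Type*) [Field K]
    (Δ : DualNumber K →ₗ[K] DualNumber K ⊗[K] DualNumber K)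
    (hΔ1 : Δ 1 = (1 : DualNumber K) ⊗ₜ[K] (DualNumber.eps : DualNumber K) +
      (DualNumber.eps : DualNumber K) ⊗ₜ[K] (1 : DualNumber K))
    (hΔx : Δ DualNumber.eps =
      (DualNumber.eps : DualNumber K) ⊗ₜ[K] (DualNumber.eps : DualNumber K)) :
    (ringChar K ≠ 2 →
      ∀ h : DualNumber K →ₗ[K] DualNumber K,
        d11 K (DualNumber K) h = 0 → d12 K (DualNumber K) Δ h = 0 → h = 0) ∧
    (ringChar K = 2 →
      ∀ h₀ : DualNumber K →ₗ[K] DualNumber K, h₀ 1 = 0 → h₀ DualNumber.eps = 1 →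
        ∀ h : DualNumber K →ₗ[K] DualNumber K,
          (d11 K (DualNumber K) h = 0 ∧ d12 K (DualNumber K) Δ h = 0) ↔
          h ∈ Submodule.span K {h₀}) := by
  have h2 := fun h h1 h2 => dual_aux K Δ hΔ1 h h1 h2
  refine ⟨?_, ?_⟩
  · intro hc h e1 e2
    obtain ⟨a, b, c⟩ := h2 h e1 e2
    apply dual_ext K h 0 (by simpa using a)
    have : (2 : K) ≠ 0 := Ring.two_ne_zero hc
    have hc0 : TrivSqZeroExt.fst (h DualNumber.eps) = 0 := by
      rcases mul_eq_zero.mp c with h | h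
      · exact absurd h this
      · exact h
    ext
    · simpa using hc0
    · simpa using b
  · intro hc h₀ h01 h0x h
    have two : (2 : K) = 0 := by
      have := ringChar.Nat.cast_ringChar (R := K)
      rw [hc] at this
      exact_mod_cast this
    rw [Submodule.mem_span_singleton]
    constructor
    · rintro ⟨e1, e2⟩
      obtain ⟨a, b, c⟩ := h2 h e1 e2
      refine ⟨TrivSqZeroExt.fst (h DualNumber.eps), ?_⟩
      apply dual_ext K
      · simp [h01, a]
      · ext
        · simp [h0x]
        · simp [h0x, b]
    · rintro ⟨c, rfl⟩
      have twoA : ∀ y : DualNumber K, y + y = 0 := fun y => by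
        rw [← two_smul K y, two, zero_smul]
      have twoT : ∀ y : DualNumber K ⊗[K] DualNumber K, y + y = 0 := fun y => by
        rw [← two_smul K y, two, zero_smul]
      constructor
      · apply TensorProduct.ext
        apply dual_ext K
        · apply dual_ext K
          · simp [d11, mu, h01]
          · simp [d11, mu, h01, h0x]
        · apply dual_ext K
          · simp [d11, mu, h01, h0x]
          · simp [d11, mu, h01, h0x, twoA]
      · apply dual_ext K
        · simp [d12, hΔ1, h01, h0x, twoT, TensorProduct.smul_tmul']
        · simp [d12, hΔ1, hΔx, h01, h0x, TensorProduct.smul_tmul']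
end
end

section
/- For the Frobenius algebra A = k[x]/(x²) over a field k, the space Z²_f(A;A) of Frobenius 2-cocycles — the k-subspace of Hom_k(A⊗A, A) × Hom_k(A, A⊗A) consisting of pairs (φ₁,φ₂) with d^{2,1}(φ₁) = 0, d^{2,2}_{(1)}(φ₁,φ₂) = 0 and d^{2,3}(φ₂) = 0 — has dimension 6 over k. -/
open TensorProduct

noncomputable section

variable (k A : Type*) [Field k] [Ring A] [Algebra k A]

namespace Z2aux

variable {K : Type*} [Field K] {M : Type*} [AddCommGroup M] [Module K M]

lemma dn_eq (a : DualNumber K) :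
    a = a.fst • (1 : DualNumber K) + a.snd • (DualNumber.eps : DualNumber K) := by
  ext <;> simp

lemma hom_ext {f g : DualNumber K →ₗ[K] M} (h1 : f 1 = g 1)
    (hx : f DualNumber.eps = g DualNumber.eps) : f = g := by
  ext a
  rw [dn_eq a]
  simp only [map_add, map_smul, h1, hx]

lemma hom2_ext {N : Type*} [AddCommGroup N] [Module K N] {f g : N ⊗[K] DualNumber K →ₗ[K] M}
    (h1 : ∀ a, f (a ⊗ₜ 1) = g (a ⊗ₜ 1))
    (hx : ∀ a, f (a ⊗ₜ DualNumber.eps) = g (a ⊗ₜ DualNumber.eps)) : f = g := by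
  apply TensorProduct.ext'
  intro a b
  rw [dn_eq b]
  simp only [tmul_add, tmul_smul, map_add, map_smul, h1, hx]

lemma homAA_ext {f g : DualNumber K ⊗[K] DualNumber K →ₗ[K] M}
    (h11 : f (1 ⊗ₜ 1) = g (1 ⊗ₜ 1))
    (h1x : f (1 ⊗ₜ DualNumber.eps) = g (1 ⊗ₜ DualNumber.eps))
    (hx1 : f (DualNumber.eps ⊗ₜ 1) = g (DualNumber.eps ⊗ₜ 1))
    (hxx : f (DualNumber.eps ⊗ₜ DualNumber.eps) = g (DualNumber.eps ⊗ₜ DualNumber.eps)) :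
    f = g := by
  apply hom2_ext
  · intro a
    rw [dn_eq a]
    simp only [add_tmul, ← smul_tmul', map_add, map_smul, h11, hx1]
  · intro a
    rw [dn_eq a]
    simp only [add_tmul, ← smul_tmul', map_add, map_smul, h1x, hxx]

lemma homAAA_ext {f g : (DualNumber K ⊗[K] DualNumber K) ⊗[K] DualNumber K →ₗ[K] M}
    (h : ∀ a b c : DualNumber K, (a = 1 ∨ a = DualNumber.eps) → (b = 1 ∨ b = DualNumber.eps) →
      (c = 1 ∨ c = DualNumber.eps) → f ((a ⊗ₜ b) ⊗ₜ c) = g ((a ⊗ₜ b) ⊗ₜ c)) :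
    f = g := by
  have key : ∀ c : DualNumber K, (c = 1 ∨ c = DualNumber.eps) →
      f ∘ₗ (TensorProduct.mk K _ _).flip c = g ∘ₗ (TensorProduct.mk K _ _).flip c := by
    intro c hc
    apply homAA_ext <;> simp only [LinearMap.comp_apply, LinearMap.flip_apply, mk_apply] <;>
      apply h <;> simp [hc]
  apply hom2_ext
  · intro a
    exact LinearMap.congr_fun (key 1 (Or.inl rfl)) a
  · intro a
    exact LinearMap.congr_fun (key _ (Or.inr rfl)) a

/-- The linear map with prescribed values on `1` and `eps`. -/
def homMk (a b : M) : DualNumber K →ₗ[K] M :=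
  (TrivSqZeroExt.fstHom K K K).toLinearMap.smulRight a +
    (TrivSqZeroExt.sndHom K K).smulRight b

@[simp] lemma homMk_one (a b : M) : homMk (K := K) a b 1 = a := by simp [homMk]
@[simp] lemma homMk_eps (a b : M) : homMk (K := K) a b DualNumber.eps = b := by simp [homMk]

/-- The linear map on `A ⊗ A` with prescribed values on the basis. -/
def homMk2 (a b c d : M) : DualNumber K ⊗[K] DualNumber K →ₗ[K] M :=
  TensorProduct.lift (homMk (homMk a b) (homMk c d))

@[simp] lemma homMk2_11 (a b c d : M) : homMk2 (K := K) a b c d (1 ⊗ₜ 1) = a := by simp [homMk2]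
@[simp] lemma homMk2_1x (a b c d : M) :
    homMk2 (K := K) a b c d (1 ⊗ₜ DualNumber.eps) = b := by simp [homMk2]
@[simp] lemma homMk2_x1 (a b c d : M) :
    homMk2 (K := K) a b c d (DualNumber.eps ⊗ₜ 1) = c := by simp [homMk2]
@[simp] lemma homMk2_xx (a b c d : M) :
    homMk2 (K := K) a b c d (DualNumber.eps ⊗ₜ DualNumber.eps) = d := by simp [homMk2]

lemma aa_eq (t : DualNumber K ⊗[K] DualNumber K) : ∃ a b c d : K,
    t = a • ((1 : DualNumber K) ⊗ₜ[K] (1 : DualNumber K)) +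
      b • ((1 : DualNumber K) ⊗ₜ[K] (DualNumber.eps : DualNumber K)) +
      c • ((DualNumber.eps : DualNumber K) ⊗ₜ[K] (1 : DualNumber K)) +
      d • ((DualNumber.eps : DualNumber K) ⊗ₜ[K] (DualNumber.eps : DualNumber K)) := by
  refine ⟨homMk2 1 0 0 0 t, homMk2 0 1 0 0 t, homMk2 0 0 1 0 t, homMk2 0 0 0 1 t, ?_⟩
  have : LinearMap.id (R := K) (M := DualNumber K ⊗[K] DualNumber K) =
     (homMk2 (K := K) (1 : K) 0 0 0).smulRight ((1 : DualNumber K) ⊗ₜ[K] (1 : DualNumber K)) +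
     (homMk2 (K := K) (0 : K) 1 0 0).smulRight ((1 : DualNumber K) ⊗ₜ[K] (DualNumber.eps : DualNumber K)) +
     (homMk2 (K := K) (0 : K) 0 1 0).smulRight ((DualNumber.eps : DualNumber K) ⊗ₜ[K] (1 : DualNumber K)) +
     (homMk2 (K := K) (0 : K) 0 0 1).smulRight
      ((DualNumber.eps : DualNumber K) ⊗ₜ[K] (DualNumber.eps : DualNumber K)) := by
    apply homAA_ext <;> simp
  exact LinearMap.congr_fun this t

/-- The coordinate functional of `x ⊗ x ⊗ 1`. -/
def xx1 : (DualNumber K ⊗[K] DualNumber K) ⊗[K] DualNumber K →ₗ[K] K :=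
  TensorProduct.lift (homMk2 0 0 0 (homMk 1 0))

abbrev T (K : Type*) [Field K] := (DualNumber K ⊗[K] DualNumber K →ₗ[K] DualNumber K) ×
        (DualNumber K →ₗ[K] DualNumber K ⊗[K] DualNumber K)

/-- The general cocycle. -/
def gen (c : Fin 6 → K) : T K :=
  (homMk2 (c 0 • 1 + c 1 • DualNumber.eps) (c 0 • DualNumber.eps) (c 0 • DualNumber.eps)
      (c 2 • 1 - c 3 • DualNumber.eps),
   homMk (c 3 • (1 ⊗ₜ 1) + c 4 • (1 ⊗ₜ DualNumber.eps + DualNumber.eps ⊗ₜ 1) +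
        c 5 • (DualNumber.eps ⊗ₜ DualNumber.eps))
      (c 4 • (DualNumber.eps ⊗ₜ DualNumber.eps) + c 2 • (1 ⊗ₜ 1)))

def fam (i : Fin 6) : T K := gen (Pi.single i 1)

lemma fam_sum (c : Fin 6 → K) : ∑ i, c i • fam i = gen c := by
  rw [Fin.sum_univ_six]
  refine Prod.ext ?_ ?_
  · apply homAA_ext <;> simp [fam, gen, Pi.single_apply] <;> try module
  · apply hom_ext <;> simp [fam, gen, Pi.single_apply] <;> try module

lemma gen_inj (c d : Fin 6 → K) (h : gen c = gen d) : ∀ i, c i = d i := by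
  have h1 := congrArg Prod.fst h
  have h2 := congrArg Prod.snd h
  have e1 := LinearMap.congr_fun h1 (1 ⊗ₜ 1)
  have e2 := LinearMap.congr_fun h1 (DualNumber.eps ⊗ₜ DualNumber.eps)
  have e3 := LinearMap.congr_fun h2 1
  have a0 := congrArg TrivSqZeroExt.fst e1
  have a1 := congrArg TrivSqZeroExt.snd e1
  have a2 := congrArg TrivSqZeroExt.fst e2
  have a3 := congrArg TrivSqZeroExt.snd e2
  have a4 := congrArg (homMk2 (K := K) (0 : K) 1 0 0) e3
  have a5 := congrArg (homMk2 (K := K) (0 : K) 0 0 1) e3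
  simp [gen] at a0 a1 a2 a3 a4 a5
  intro i
  fin_cases i <;> assumption

lemma fam_li : LinearIndependent K (fam (K := K)) := by
  rw [Fintype.linearIndependent_iffₛ]
  intro c d h
  rw [fam_sum, fam_sum] at h
  exact gen_inj c d h

lemma gen_cocycle (Δ : DualNumber K →ₗ[K] DualNumber K ⊗[K] DualNumber K)
    (hΔ1 : Δ 1 = (1 : DualNumber K) ⊗ₜ[K] (DualNumber.eps : DualNumber K) +
      (DualNumber.eps : DualNumber K) ⊗ₜ[K] (1 : DualNumber K))
    (hΔx : Δ DualNumber.eps =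
      (DualNumber.eps : DualNumber K) ⊗ₜ[K] (DualNumber.eps : DualNumber K))
    (c : Fin 6 → K) :
    d21 K (DualNumber K) (gen c).1 = 0 ∧ d221 K (DualNumber K) Δ (gen c).1 (gen c).2 = 0 ∧
          d23 K (DualNumber K) Δ (gen c).2 = 0 := by
  refine ⟨?_, ?_, ?_⟩
  · apply homAAA_ext
    rintro _ _ _ (rfl | rfl) (rfl | rfl) (rfl | rfl) <;>
      simp [d21, gen, asso, mu, mul_add, add_mul, mul_sub, sub_mul] <;> try module
  · apply homAA_ext <;>
      simp [d221, gen, asso, mu, hΔ1, hΔx, tmul_add, add_tmul, sub_tmul, ← smul_tmul'] <;>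
      try module
  · apply hom_ext <;>
      simp [d23, gen, asso, hΔ1, hΔx, tmul_add, add_tmul, sub_tmul, ← smul_tmul'] <;>
      try module

set_option maxHeartbeats 2000000 in
lemma cocycle_gen (Δ : DualNumber K →ₗ[K] DualNumber K ⊗[K] DualNumber K)
    (hΔ1 : Δ 1 = (1 : DualNumber K) ⊗ₜ[K] (DualNumber.eps : DualNumber K) +
      (DualNumber.eps : DualNumber K) ⊗ₜ[K] (1 : DualNumber K))
    (hΔx : Δ DualNumber.eps =
      (DualNumber.eps : DualNumber K) ⊗ₜ[K] (DualNumber.eps : DualNumber K))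
    (p : T K) (h1 : d21 K (DualNumber K) p.1 = 0) (h2 : d221 K (DualNumber K) Δ p.1 p.2 = 0)
    (h3 : d23 K (DualNumber K) Δ p.2 = 0) : ∃ c, gen c = p := by
  obtain ⟨f, g⟩ := p
  dsimp only at h1 h2 h3
  obtain ⟨u0, u1, hu⟩ : ∃ u0 u1 : K, f (1 ⊗ₜ 1) = u0 • 1 + u1 • DualNumber.eps :=
    ⟨_, _, dn_eq _⟩
  obtain ⟨v0, v1, hv⟩ : ∃ u0 u1 : K, f (DualNumber.eps ⊗ₜ DualNumber.eps) =
    u0 • 1 + u1 • DualNumber.eps := ⟨_, _, dn_eq _⟩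
  obtain ⟨w00, w01, w10, w11, hw⟩ := aa_eq (g 1)
  have e1 := LinearMap.congr_fun h1 ((1 ⊗ₜ 1) ⊗ₜ DualNumber.eps)
  have e2 := LinearMap.congr_fun h1 ((DualNumber.eps ⊗ₜ 1) ⊗ₜ 1)
  simp [d21, asso, mu, hu, add_mul, mul_add] at e1 e2
  have f1x : f (1 ⊗ₜ DualNumber.eps) = u0 • DualNumber.eps := by
    exact (sub_eq_zero.mp e1).symm
  have fx1 : f (DualNumber.eps ⊗ₜ 1) = u0 • DualNumber.eps := by
    rw [← sub_eq_zero, ← e2]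
    abel
  have e3 := LinearMap.congr_fun h2 (DualNumber.eps ⊗ₜ 1)
  simp [d221, asso, mu, hΔ1, hΔx, hv, hw, fx1, tmul_add, add_tmul, ← smul_tmul'] at e3
  have gx : g DualNumber.eps = (w00 + v1) • (DualNumber.eps ⊗ₜ 1) +
      w01 • (DualNumber.eps ⊗ₜ DualNumber.eps) + v0 • (1 ⊗ₜ 1) := by
    rw [← sub_eq_zero, ← e3]
    module
  have e4 := congrArg xx1 (LinearMap.congr_fun h3 DualNumber.eps)
  simp [d23, asso, hΔ1, hΔx, gx, tmul_add, add_tmul, ← smul_tmul', xx1] at e4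
  have hv1 : v1 = - w00 := by linear_combination -e4
  subst hv1
  have e5 := congrArg xx1 (LinearMap.congr_fun h3 1)
  simp [d23, asso, hΔ1, hΔx, gx, hw, tmul_add, add_tmul, ← smul_tmul', xx1] at e5
  have hw10 : w10 = w01 := by linear_combination -e5
  subst hw10
  refine ⟨![u0, u1, v0, w00, w10, w11], Prod.ext ?_ ?_⟩
  · apply homAA_ext <;> simp [gen, *] <;> try module
  · apply hom_ext <;> simp [gen, *] <;> try module

end Z2aux

/-- for the Frobenius algebra `A = k[x]/(x²)` (dual numbers, with
`Δ(1) = 1⊗x + x⊗1`, `Δ(x) = x⊗x` where `x = ε`), the space `Z²_f(A;A)` of Frobenius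
2-cocycles — pairs `(φ₁,φ₂)` with `d^{2,1}(φ₁) = 0`, `d^{2,2}_{(1)}(φ₁,φ₂) = 0`,
`d^{2,3}(φ₂) = 0` — has dimension 6 over `k`: it is the span of 6 linearly independent
vectors. -/
theorem dualNumber_Z2_dim_six (K : Type*) [Field K]
    (Δ : DualNumber K →ₗ[K] DualNumber K ⊗[K] DualNumber K)
    (hΔ1 : Δ 1 = (1 : DualNumber K) ⊗ₜ[K] (DualNumber.eps : DualNumber K) +
      (DualNumber.eps : DualNumber K) ⊗ₜ[K] (1 : DualNumber K))
    (hΔx : Δ DualNumber.eps =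
      (DualNumber.eps : DualNumber K) ⊗ₜ[K] (DualNumber.eps : DualNumber K)) :
    ∃ f : Fin 6 → (DualNumber K ⊗[K] DualNumber K →ₗ[K] DualNumber K) ×
        (DualNumber K →ₗ[K] DualNumber K ⊗[K] DualNumber K),
      LinearIndependent K f ∧
      ∀ p : (DualNumber K ⊗[K] DualNumber K →ₗ[K] DualNumber K) ×
          (DualNumber K →ₗ[K] DualNumber K ⊗[K] DualNumber K),
        (d21 K (DualNumber K) p.1 = 0 ∧ d221 K (DualNumber K) Δ p.1 p.2 = 0 ∧
          d23 K (DualNumber K) Δ p.2 = 0) ↔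
        p ∈ Submodule.span K (Set.range f) := by
  refine ⟨Z2aux.fam, ?_, ?_⟩
  · exact Z2aux.fam_li
  · intro p
    rw [Submodule.mem_span_range_iff_exists_fun]
    simp only [Z2aux.fam_sum]
    constructor
    · rintro ⟨h1, h2, h3⟩
      exact Z2aux.cocycle_gen Δ hΔ1 hΔx p h1 h2 h3
    · rintro ⟨c, rfl⟩
      exact Z2aux.gen_cocycle Δ hΔ1 hΔx c
end
end

section
/- For the group-algebra Frobenius algebra A = k[ℤ/2] over a field k, the space of Frobenius 1-cocycles Z¹_f(A;A) = {h : d^{1,1}(h)=0 and d^{1,2}(h)=0} has dimension 0 over k if char(k) ≠ 2, and dimension 1 over k if char(k) = 2 (in that case it is spanned by the k-linear map h with h(1) = 0 and h(g) = g). In particular H¹_f(A;A) = 0 if char(k) ≠ 2 and H¹_f(A;A) ≅ k if char(k) = 2. -/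
open TensorProduct

noncomputable section

variable (k A : Type*) [Field k] [Ring A] [Algebra k A]

/-- The group algebra `k[ℤ/2]`. -/
abbrev GroupAlg (K : Type*) [Field K] := MonoidAlgebra K (Multiplicative (ZMod 2))

/-- The generator `g` of `ℤ/2` inside `k[ℤ/2]`. -/
def gElt (K : Type*) [Field K] : GroupAlg K :=
  MonoidAlgebra.of K (Multiplicative (ZMod 2)) (Multiplicative.ofAdd (1 : ZMod 2))

theorem gElt_mul_self (K : Type*) [Field K] : gElt K * gElt K = 1 := by
  unfold gElt
  rw [← map_mul]
  have : (Multiplicative.ofAdd (1 : ZMod 2)) * Multiplicative.ofAdd (1 : ZMod 2) = 1 := by decide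
  rw [this, map_one]

theorem groupAlg_hom_ext (K : Type*) [Field K] {M : Type*} [AddCommGroup M] [Module K M]
    (f f' : GroupAlg K →ₗ[K] M) (h1 : f 1 = f' 1) (hg : f (gElt K) = f' (gElt K)) : f = f' := by
  apply (MonoidAlgebra.basis (Multiplicative (ZMod 2)) K).ext
  intro i
  rw [MonoidAlgebra.basis_apply]
  have hi : i = 1 ∨ i = Multiplicative.ofAdd (1 : ZMod 2) := by
    revert i; decide
  rcases hi with rfl | rfl
  · exact h1
  · exact hg

/-- The coefficient functional at `i`. -/
def coeffFun (K : Type*) [Field K] (i : Multiplicative (ZMod 2)) : GroupAlg K →ₗ[K] K :=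
  (MonoidAlgebra.basis (Multiplicative (ZMod 2)) K).coord i

theorem coeffFun_single (K : Type*) [Field K] (i j : Multiplicative (ZMod 2)) :
    coeffFun K i (MonoidAlgebra.single j 1) = if j = i then 1 else 0 := by
  unfold coeffFun
  rw [← MonoidAlgebra.basis_apply, Module.Basis.coord_apply, Module.Basis.repr_self,
    Finsupp.single_apply]

theorem c1_one (K : Type*) [Field K] : coeffFun K 1 1 = 1 := by
  rw [MonoidAlgebra.one_def, coeffFun_single]; simp

theorem c1_g (K : Type*) [Field K] : coeffFun K 1 (gElt K) = 0 := by
  have : gElt K = MonoidAlgebra.single (Multiplicative.ofAdd (1 : ZMod 2)) 1 := rfl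
  rw [this, coeffFun_single, if_neg (by decide)]

theorem cg_one (K : Type*) [Field K] : coeffFun K (Multiplicative.ofAdd (1 : ZMod 2)) 1 = 0 := by
  rw [MonoidAlgebra.one_def, coeffFun_single, if_neg (by decide)]

theorem cg_g (K : Type*) [Field K] :
    coeffFun K (Multiplicative.ofAdd (1 : ZMod 2)) (gElt K) = 1 := by
  have : gElt K = MonoidAlgebra.single (Multiplicative.ofAdd (1 : ZMod 2)) 1 := rfl
  rw [this, coeffFun_single, if_pos rfl]

theorem groupAlg_decomp (K : Type*) [Field K] (x : GroupAlg K) :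
    x = coeffFun K 1 x • (1 : GroupAlg K)
      + coeffFun K (Multiplicative.ofAdd (1 : ZMod 2)) x • gElt K := by
  have := groupAlg_hom_ext K (LinearMap.id : GroupAlg K →ₗ[K] GroupAlg K)
    ((coeffFun K 1).smulRight 1 +
      (coeffFun K (Multiplicative.ofAdd (1 : ZMod 2))).smulRight (gElt K))
    (by simp [c1_one, cg_one]) (by simp [c1_g, cg_g])
  exact LinearMap.congr_fun this x

theorem d11_leibniz (K : Type*) [Field K] (h : GroupAlg K →ₗ[K] GroupAlg K)
    (x y : GroupAlg K) :
    d11 K (GroupAlg K) h (x ⊗ₜ y) = h x * y + x * h y - h (x * y) := by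
  simp [d11, mu]

theorem h_one (K : Type*) [Field K] (h : GroupAlg K →ₗ[K] GroupAlg K)
    (hd : d11 K (GroupAlg K) h = 0) : h 1 = 0 := by
  have := d11_leibniz K h 1 1
  rw [hd] at this
  simpa using this.symm

/-- for the group-algebra Frobenius algebra `A = k[ℤ/2]` (with
`Δ(1) = 1⊗1 + g⊗g`, `Δ(g) = 1⊗g + g⊗1`), the space of Frobenius 1-cocycles is `0` if
`char k ≠ 2`, and is 1-dimensional, spanned by the map `h₀` with `h₀(1) = 0`, `h₀(g) = g`,
if `char k = 2` (hence `H¹_f = 0` resp. `H¹_f ≅ k`). -/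
theorem groupAlgebra_Z1 (K : Type*) [Field K]
    (Δ : GroupAlg K →ₗ[K] GroupAlg K ⊗[K] GroupAlg K)
    (hΔ1 : Δ 1 = (1 : GroupAlg K) ⊗ₜ[K] (1 : GroupAlg K) + gElt K ⊗ₜ[K] gElt K)
    (hΔg : Δ (gElt K) = (1 : GroupAlg K) ⊗ₜ[K] gElt K + gElt K ⊗ₜ[K] (1 : GroupAlg K)) :
    (ringChar K ≠ 2 →
      ∀ h : GroupAlg K →ₗ[K] GroupAlg K,
        d11 K (GroupAlg K) h = 0 → d12 K (GroupAlg K) Δ h = 0 → h = 0) ∧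
    (ringChar K = 2 →
      ∀ h₀ : GroupAlg K →ₗ[K] GroupAlg K, h₀ 1 = 0 → h₀ (gElt K) = gElt K →
        ∀ h : GroupAlg K →ₗ[K] GroupAlg K,
          (d11 K (GroupAlg K) h = 0 ∧ d12 K (GroupAlg K) Δ h = 0) ↔
          h ∈ Submodule.span K {h₀}) := by
  have hgg := gElt_mul_self K
  constructor
  · intro hc h h11 _
    have h1 := h_one K h h11
    have h2 : (2 : K) ≠ 0 := Ring.two_ne_zero hc
    apply groupAlg_hom_ext K h 0 (by simpa using h1)
    have e := d11_leibniz K h (gElt K) (gElt K)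
    rw [h11, hgg, h1, LinearMap.zero_apply, sub_zero, mul_comm, ← two_smul K] at e
    have e2 : gElt K * h (gElt K) = 0 := by
      rcases smul_eq_zero.mp e.symm with h' | h'
      · exact absurd h' h2
      · exact h'
    calc h (gElt K) = gElt K * (gElt K * h (gElt K)) := by rw [← mul_assoc, hgg, one_mul]
      _ = 0 := by rw [e2, mul_zero]
  · intro hc h₀ h01 h0g h
    have h2 : (2 : K) = 0 := by
      have := ringChar.Nat.cast_ringChar (R := K)
      rw [hc] at this
      exact_mod_cast this
    rw [Submodule.mem_span_singleton]
    constructor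
    · rintro ⟨h11, h12⟩
      have h1 := h_one K h h11
      refine ⟨coeffFun K (Multiplicative.ofAdd (1 : ZMod 2)) (h (gElt K)), ?_⟩
      have e := LinearMap.congr_fun h12 1
      simp only [d12, LinearMap.sub_apply, LinearMap.add_apply, LinearMap.comp_apply, hΔ1,
        map_add, LinearMap.rTensor_tmul, LinearMap.lTensor_tmul, h1, zero_tmul, tmul_zero,
        zero_add, map_zero, sub_zero, LinearMap.zero_apply] at e
      have e2 := congrArg (fun t => LinearMap.mul' K K (TensorProduct.map (coeffFun K 1)
        (coeffFun K (Multiplicative.ofAdd (1 : ZMod 2))) t)) e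
      simp [c1_g, cg_g] at e2
      apply groupAlg_hom_ext
      · simp [h01, h1]
      · have d := groupAlg_decomp K (h (gElt K))
        rw [e2, zero_smul, zero_add] at d
        rw [LinearMap.smul_apply, h0g]
        exact d.symm
    · rintro ⟨c, rfl⟩
      constructor
      · apply TensorProduct.ext
        apply groupAlg_hom_ext <;> apply groupAlg_hom_ext <;>
          refine (d11_leibniz K (c • h₀) _ _).trans ?_ <;>
          simp [h01, h0g, hgg, ← two_smul K, h2]
      · apply groupAlg_hom_ext
        · simp [d12, hΔ1, h01, h0g, smul_tmul', ← two_smul K, h2]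
        · simp [d12, hΔg, h01, h0g, smul_tmul', smul_add]
          abel
end
end

section
/- (Frobenius skein solutions, case C = T = 0.) Let A be an associative unital k-algebra with a Frobenius structure Δ and counit ε; set β = ε∘μ : A⊗A → k, γ : k → A⊗A the map with γ(1) = Δ(1), and δ₀ = β(Δ(1)) ∈ k. Let a, b, a', b' ∈ k and put R = a·id_{A⊗A} + b·(γ∘β) and R' = a'·id_{A⊗A} + b'·(γ∘β). If a² + b² + δ₀ab = 0 then R satisfies the Yang–Baxter equation; if a'² + b'² + δ₀a'b' = 0 then R' satisfies the Yang–Baxter equation; and if ab' + a'b + δ₀bb' = 0 then R'∘R = (aa')·id_{A⊗A} (so R' is a two-sided inverse of R whenever in addition aa' = 1). -/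
open TensorProduct

noncomputable section

variable (k A : Type*) [Field k] [Ring A] [Algebra k A]

theorem aux_ring {B : Type*} [Ring B] [Algebra k B] (a b d : k) (X Y : B)
    (h : a ^ 2 + b ^ 2 + d * a * b = 0)
    (hX : X * X = d • X) (hY : Y * Y = d • Y) (h1 : X * (Y * X) = X) (h2 : Y * (X * Y) = Y) :
    (a • 1 + b • X) * ((a • 1 + b • Y) * (a • 1 + b • X)) =
      (a • 1 + b • Y) * ((a • 1 + b • X) * (a • 1 + b • Y)) := by
  have hb : b * b * b = - (a * a * b) - d * a * b * b := by linear_combination b * h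
  simp only [mul_add, add_mul, smul_mul_assoc, mul_smul_comm, one_mul, mul_one, hX, hY, h1, h2,
    smul_smul, smul_add]
  rw [hb]
  module

theorem aux_ybe (Δ : A →ₗ[k] A ⊗[k] A) (ε : A →ₗ[k] k)
    (hΔ : IsFrobenius k A Δ) (hε : IsCounit k A Δ ε) (a b : k)
    (h : a ^ 2 + b ^ 2 + (ε ∘ₗ mu k A) (Δ 1) * a * b = 0) :
    YBE k A (a • LinearMap.id + b • (ε ∘ₗ mu k A).smulRight (Δ 1)) := by
  obtain ⟨S, hS⟩ := TensorProduct.exists_finset (Δ 1)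
  have z1 : ∀ z : A, ∑ i ∈ S, ε (i.2 * z) • i.1 = z := by
    intro z
    have e1 := LinearMap.congr_fun hΔ.2.2 ((1 : A) ⊗ₜ[k] z)
    have e2 := LinearMap.congr_fun hε.2 z
    simp [mu, asso, hS, TensorProduct.sum_tmul] at e1
    simpa [e1] using e2
  have z2 : ∀ z : A, ∑ i ∈ S, ε (z * i.1) • i.2 = z := by
    intro z
    have e1 := LinearMap.congr_fun hΔ.2.1 (z ⊗ₜ[k] (1 : A))
    have e2 := LinearMap.congr_fun hε.1 z
    simp [mu, asso, hS, TensorProduct.tmul_sum] at e1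
    simpa [e1] using e2
  set e : A ⊗[k] A →ₗ[k] A ⊗[k] A := (ε ∘ₗ mu k A).smulRight (Δ 1) with he
  have het : ∀ x y : A, e (x ⊗ₜ[k] y) = ε (x * y) • Δ 1 := by
    intro x y; simp [he, mu]
  have hee : e ∘ₗ e = ((ε ∘ₗ mu k A) (Δ 1)) • e := by
    ext x y; simp [he, smul_smul, mul_comm]
  let X : Module.End k ((A ⊗[k] A) ⊗[k] A) := e.rTensor A
  let Y : Module.End k ((A ⊗[k] A) ⊗[k] A) :=
    (asso k A).symm.toLinearMap ∘ₗ e.lTensor A ∘ₗ (asso k A).toLinearMap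
  have hXt : ∀ x y z : A, X ((x ⊗ₜ[k] y) ⊗ₜ[k] z) = ε (x * y) • (Δ 1 ⊗ₜ[k] z) := by
    intro x y z
    simp [X, het, TensorProduct.smul_tmul']
  have hYt : ∀ x y z : A, Y ((x ⊗ₜ[k] y) ⊗ₜ[k] z) =
      ε (y * z) • (asso k A).symm (x ⊗ₜ[k] Δ 1) := by
    intro x y z
    simp [Y, asso, het]
  have hYD : ∀ z : A, Y (Δ 1 ⊗ₜ[k] z) = (asso k A).symm (z ⊗ₜ[k] Δ 1) := by
    intro z
    conv_lhs => rw [hS]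
    rw [TensorProduct.sum_tmul, map_sum]
    simp only [hYt]
    simp only [← map_smul, ← map_sum, TensorProduct.smul_tmul', ← TensorProduct.sum_tmul, z1]
  have hXD : ∀ z : A, X ((asso k A).symm (z ⊗ₜ[k] Δ 1)) = Δ 1 ⊗ₜ[k] z := by
    intro z
    conv_lhs => rw [hS]
    rw [TensorProduct.tmul_sum, map_sum, map_sum]
    simp only [asso, TensorProduct.assoc_symm_tmul, hXt]
    simp only [← TensorProduct.tmul_smul, ← TensorProduct.tmul_sum, z2]
  have hX : X * X = ((ε ∘ₗ mu k A) (Δ 1)) • X := by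
    change e.rTensor A ∘ₗ e.rTensor A = _
    rw [← LinearMap.rTensor_comp, hee, LinearMap.rTensor_smul]
  have hY : Y * Y = ((ε ∘ₗ mu k A) (Δ 1)) • Y := by
    apply LinearMap.ext
    intro t
    have := LinearMap.congr_fun (congrArg (LinearMap.lTensor A) hee) (asso k A t)
    rw [LinearMap.lTensor_comp, LinearMap.lTensor_smul] at this
    simp only [LinearMap.comp_apply, LinearMap.smul_apply] at this
    simp only [Y, Module.End.mul_apply, LinearMap.comp_apply, LinearEquiv.coe_coe,
      LinearEquiv.apply_symm_apply, LinearMap.smul_apply, this, map_smul]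
  have h1 : X * (Y * X) = X := by
    apply TensorProduct.ext_threefold
    intro x y z
    simp only [Module.End.mul_apply, hXt, map_smul, hYD, hXD]
  have h2 : Y * (X * Y) = Y := by
    apply TensorProduct.ext_threefold
    intro x y z
    simp only [Module.End.mul_apply, hYt, map_smul, hYD, hXD]
  have key := aux_ring k a b _ X Y h hX hY h1 h2
  have r1 : (a • LinearMap.id + b • e).rTensor A = a • 1 + b • X := by
    rw [LinearMap.rTensor_add, LinearMap.rTensor_smul, LinearMap.rTensor_smul,
      LinearMap.rTensor_id]
    rfl
  have r2 : (asso k A).symm.toLinearMap ∘ₗ (a • LinearMap.id + b • e).lTensor A ∘ₗ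
      (asso k A).toLinearMap = a • 1 + b • Y := by
    rw [LinearMap.lTensor_add, LinearMap.lTensor_smul, LinearMap.lTensor_smul,
      LinearMap.lTensor_id]
    apply LinearMap.ext
    intro t
    simp [Y]
  unfold YBE
  rw [r1, r2]
  exact key

/-- Frobenius skein solutions, case `C = T = 0`: with `β = ε∘μ`,
`γ(1) = Δ(1)`, `δ₀ = β(Δ(1))`, and `R = a·id + b·(γ∘β)`, `R' = a'·id + b'·(γ∘β)`:
if `a² + b² + δ₀ab = 0` then `R` satisfies the YBE; if `a'² + b'² + δ₀a'b' = 0` then `R'`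
satisfies the YBE; and if `ab' + a'b + δ₀bb' = 0` then `R'∘R = (aa')·id`. -/
theorem frobenius_skein_case_CT_zero (Δ : A →ₗ[k] A ⊗[k] A) (ε : A →ₗ[k] k)
    (hΔ : IsFrobenius k A Δ) (hε : IsCounit k A Δ ε)
    (a b a' b' : k) :
    (a ^ 2 + b ^ 2 + (ε ∘ₗ mu k A) (Δ 1) * a * b = 0 →
      YBE k A (a • LinearMap.id + b • (ε ∘ₗ mu k A).smulRight (Δ 1))) ∧
    (a' ^ 2 + b' ^ 2 + (ε ∘ₗ mu k A) (Δ 1) * a' * b' = 0 →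
      YBE k A (a' • LinearMap.id + b' • (ε ∘ₗ mu k A).smulRight (Δ 1))) ∧
    (a * b' + a' * b + (ε ∘ₗ mu k A) (Δ 1) * b * b' = 0 →
      (a' • LinearMap.id + b' • (ε ∘ₗ mu k A).smulRight (Δ 1)) ∘ₗ
        (a • LinearMap.id + b • (ε ∘ₗ mu k A).smulRight (Δ 1)) =
      (a * a') • (LinearMap.id : A ⊗[k] A →ₗ[k] A ⊗[k] A)) := by
  refine ⟨aux_ybe k A Δ ε hΔ hε a b, aux_ybe k A Δ ε hΔ hε a' b', fun h => ?_⟩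
  generalize ε ∘ₗ mu k A = β at *
  apply LinearMap.ext
  intro t
  simp only [LinearMap.comp_apply, LinearMap.add_apply, LinearMap.smul_apply, LinearMap.id_apply,
    LinearMap.smulRight_apply, map_add, map_smul, smul_eq_mul]
  have h3 : a * b' * β t = - (a' * b * β t) - β (Δ 1) * b * b' * β t := by
    linear_combination β t * h
  have h4 : (a * b' * β t) • Δ 1 = (- (a' * b * β t) - β (Δ 1) * b * b' * β t) • Δ 1 := by
    rw [h3]
  linear_combination (norm := module) h4
end
end

section
/- (Frobenius skein solutions, case A = B = 0.) Let A be an associative unital k-algebra with a Frobenius structure Δ such that A is commutative (μ∘τ = μ), Δ is cocommutative (τ∘Δ = Δ), and μ∘Δ = δ₁·id_A for some δ₁ ∈ k. Then for any c, T ∈ k, the map R = c·(Δ∘μ) + T·τ : A⊗A → A⊗A satisfies the Yang–Baxter equation; moreover, if c', T' ∈ k satisfy T·T' = 1 and c·T' + c'·T + δ₁·c·c' = 0, then (c'·(Δ∘μ) + T'·τ)∘R = id_{A⊗A}, i.e., R is invertible with inverse c'·(Δ∘μ) + T'·τ. -/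
open TensorProduct

noncomputable section

variable (k A : Type*) [Field k] [Ring A] [Algebra k A]

namespace FrobAux

open Algebra.TensorProduct

section
variable {k A C D : Type*} [Field k] [CommRing A] [Algebra k A] [CommRing C] [Algebra k C]
  [CommRing D] [Algebra k D]

/-- The algebra map out of the triple tensor power given by three algebra maps. -/
def L (f g h : A →ₐ[k] C) : ((A ⊗[k] A) ⊗[k] A) →ₐ[k] C := productMap (productMap f g) h

def i1 : A →ₐ[k] ((A ⊗[k] A) ⊗[k] A) := (includeLeft (R := k) (S := k)).comp includeLeft
def i2 : A →ₐ[k] ((A ⊗[k] A) ⊗[k] A) := (includeLeft (R := k) (S := k)).comp includeRight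
def i3 : A →ₐ[k] ((A ⊗[k] A) ⊗[k] A) := includeRight

lemma L_i1 (f g h : A →ₐ[k] C) (x : A) : L f g h (i1 x) = f x := by simp [L, i1]
lemma L_i2 (f g h : A →ₐ[k] C) (x : A) : L f g h (i2 x) = g x := by simp [L, i2]
lemma L_i3 (f g h : A →ₐ[k] C) (x : A) : L f g h (i3 x) = h x := by simp [L, i3]

lemma L_tmul (f g h : A →ₐ[k] C) (x y z : A) :
    L f g h ((x ⊗ₜ y) ⊗ₜ z) = f x * g y * h z := by simp [L]

lemma tmul_eq (x y z : A) :
    ((x ⊗ₜ[k] y) ⊗ₜ[k] z) = i1 x * i2 y * i3 z := by simp [i1, i2, i3]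

lemma map_pm (F : C →ₐ[k] D) (f g : A →ₐ[k] C) (e : A ⊗[k] A) :
    F (productMap f g e) = productMap (F.comp f) (F.comp g) e := by
  induction e with
  | zero => simp
  | tmul x y => simp
  | add x y hx hy => simp [hx, hy]

lemma pm_swap (f g : A →ₐ[k] C) (e : A ⊗[k] A) (he : TensorProduct.comm k A A e = e) :
    productMap f g e = productMap g f e := by
  conv_lhs => rw [← he]
  generalize e = w
  induction w with
  | zero => simp
  | tmul x y => simp [mul_comm]
  | add x y hx hy => simp [hx, hy]

lemma pm_diag (f : A →ₐ[k] C) (e : A ⊗[k] A) :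
    productMap f f e = f (LinearMap.mul' k A e) := by
  induction e with
  | zero => simp
  | tmul x y => simp
  | add x y hx hy => simp [hx, hy]

lemma pm_rel (f g : A →ₐ[k] C) (e : A ⊗[k] A)
    (he : ∀ a : A, (a ⊗ₜ[k] (1 : A)) * e = ((1 : A) ⊗ₜ[k] a) * e) (a : A) :
    f a * productMap f g e = g a * productMap f g e := by
  have := congrArg (productMap f g) (he a)
  simpa using this

/-- If `f` and `g` agree after multiplication by `E`, so do the induced maps. -/
lemma pm_mul (f g h : A →ₐ[k] C) (E : C) (hE : ∀ a, f a * E = g a * E) (e : A ⊗[k] A) :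
    productMap f h e * E = productMap g h e * E := by
  induction e with
  | zero => simp
  | tmul x y => 
    simp only [productMap_apply_tmul]
    linear_combination h y * hE x
  | add x y hx hy => simp [add_mul, hx, hy]

/-- The final computation in a commutative algebra. -/
lemma final (c T : k) (d x1 x2 x3 y1 y2 z1 E12 E13 E23 : C)
    (hx : x1 * E12 = x2 * E12) (q1 : E13 * E12 = E23 * E12) (q3 : E12 * E12 = d * E12) :
    c • ((c • ((c • (x1 * y1 * z1 * d) + T • (x1 * y1 * z1)) * E13) +
            T • (c • (x1 * y1 * z1 * E13) + T • (x3 * y1 * z1))) * E12) +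
      T • (c • ((c • (x2 * y2 * z1 * E12) + T • (x1 * y2 * z1)) * E13) +
          T • (c • (x2 * y2 * z1 * E23) + T • (x3 * y2 * z1))) =
    c • ((c • ((c • (x1 * y1 * z1 * E12) + T • (x1 * y2 * z1)) * E12) +
            T • (c • (x2 * y1 * z1 * E12) + T • (x2 * y2 * z1))) * E23) +
      T • (c • ((c • (x1 * y1 * z1 * E12) + T • (x1 * y2 * z1)) * E13) +
          T • (c • (x3 * y1 * z1 * E12) + T • (x3 * y2 * z1))) := by
  simp only [Algebra.smul_def]
  generalize algebraMap k C c = c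
  generalize algebraMap k C T = T
  linear_combination c ^ 3 * x1 * y1 * z1 * (d * q1 - E23 * q3)
    + c ^ 2 * T * z1 * ((x1 * y1 + x2 * y2) * q1 + E23 * (y1 - y2) * hx)

set_option maxHeartbeats 2000000 in
/-- The Yang-Baxter equation in the commutative case. -/
lemma ybe (Δ : A →ₗ[k] A ⊗[k] A) (e : A ⊗[k] A) (hl : ∀ a, Δ a = (a ⊗ₜ[k] (1 : A)) * e)
    (hr : ∀ a, Δ a = ((1 : A) ⊗ₜ[k] a) * e) (hs : TensorProduct.comm k A A e = e)
    (δ₁ : k) (hm : LinearMap.mul' k A e = δ₁ • (1 : A)) (c T : k) :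
    YBE k A (c • (Δ ∘ₗ mu k A) + T • tau k A) := by
  have he : ∀ a : A, (a ⊗ₜ[k] (1 : A)) * e = ((1 : A) ⊗ₜ[k] a) * e := fun a => by
    rw [← hl, hr]
  set R := c • (Δ ∘ₗ mu k A) + T • tau k A with hR
  obtain ⟨E12, h12⟩ : ∃ E, E = productMap (i1 (k := k) (A := A)) i2 e := ⟨_, rfl⟩
  obtain ⟨E13, h13⟩ : ∃ E, E = productMap (i1 (k := k) (A := A)) i3 e := ⟨_, rfl⟩
  obtain ⟨E23, h23⟩ : ∃ E, E = productMap (i2 (k := k) (A := A)) i3 e := ⟨_, rfl⟩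
  have R1 : ∀ u, R.rTensor A u = c • (L i1 i1 i3 u * E12) + T • L i2 i1 i3 u := by
    have : R.rTensor A = c • (LinearMap.mulRight k E12 ∘ₗ (L i1 i1 i3).toLinearMap)
        + T • (L (k := k) (A := A) i2 i1 i3).toLinearMap := by
      ext x y z
      have h : (Δ (x * y)) ⊗ₜ[k] z = i1 x * i1 y * i3 z * E12 := by
        rw [hl, h12]
        generalize e = w
        induction w with
        | zero => simp
        | tmul a b => simp [i1, i2, i3]
        | add a b ha hb => simp only [mul_add, add_tmul, map_add, ha, hb]
      simp [hR, L_tmul, mu, tau, add_tmul, smul_tmul', h]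
      simp [i1, i2, i3, smul_tmul']
    intro u; rw [this]; simp
  have R2 : ∀ u, ((asso k A).symm.toLinearMap ∘ₗ R.lTensor A ∘ₗ (asso k A).toLinearMap) u
      = c • (L i1 i2 i2 u * E23) + T • L i1 i3 i2 u := by
    have : ((asso k A).symm.toLinearMap ∘ₗ R.lTensor A ∘ₗ (asso k A).toLinearMap)
      = c • (LinearMap.mulRight k E23 ∘ₗ (L i1 i2 i2).toLinearMap)
        + T • (L (k := k) (A := A) i1 i3 i2).toLinearMap := by
      ext x y z
      have h : (TensorProduct.assoc k A A A).symm (x ⊗ₜ[k] (Δ (y * z)))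
          = i1 x * i2 y * i2 z * E23 := by
        rw [hl, h23]
        generalize e = w
        induction w with
        | zero => simp
        | tmul a b => simp [i1, i2, i3]
        | add a b ha hb => simp only [mul_add, tmul_add, map_add, ha, hb]
      simp [hR, L_tmul, mu, tau, asso, tmul_add, h]
      simp [i1, i2, i3]
    intro u; rw [this]; simp
  have C1 : ∀ (f g h : A →ₐ[k] ((A ⊗[k] A) ⊗[k] A)), (L f g h).comp i1 = f :=
    fun f g h => AlgHom.ext (L_i1 f g h)
  have C2 : ∀ (f g h : A →ₐ[k] ((A ⊗[k] A) ⊗[k] A)), (L f g h).comp i2 = g :=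
    fun f g h => AlgHom.ext (L_i2 f g h)
  have C3 : ∀ (f g h : A →ₐ[k] ((A ⊗[k] A) ⊗[k] A)), (L f g h).comp i3 = h :=
    fun f g h => AlgHom.ext (L_i3 f g h)
  have L12 : ∀ (f g h : A →ₐ[k] ((A ⊗[k] A) ⊗[k] A)), L f g h E12 = productMap f g e := by
    intro f g h; rw [h12, map_pm, C1, C2]
  have L13 : ∀ (f g h : A →ₐ[k] ((A ⊗[k] A) ⊗[k] A)), L f g h E13 = productMap f h e := by
    intro f g h; rw [h13, map_pm, C1, C3]
  have L23 : ∀ (f g h : A →ₐ[k] ((A ⊗[k] A) ⊗[k] A)), L f g h E23 = productMap g h e := by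
    intro f g h; rw [h23, map_pm, C2, C3]
  have D : ∀ f : A →ₐ[k] ((A ⊗[k] A) ⊗[k] A), productMap f f e = algebraMap k _ δ₁ := by
    intro f; rw [pm_diag, hm, map_smul, map_one, Algebra.algebraMap_eq_smul_one]
  have s21 : productMap (i2 (k := k) (A := A)) i1 e = E12 := by rw [h12, pm_swap _ _ _ hs]
  have s31 : productMap (i3 (k := k) (A := A)) i1 e = E13 := by rw [h13, pm_swap _ _ _ hs]
  have s32 : productMap (i3 (k := k) (A := A)) i2 e = E23 := by rw [h23, pm_swap _ _ _ hs]
  have r12 : ∀ a, i1 a * E12 = i2 a * E12 := by rw [h12]; exact pm_rel _ _ e he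
  have r13 : ∀ a, i1 a * E13 = i3 a * E13 := by rw [h13]; exact pm_rel _ _ e he
  have r23 : ∀ a, i2 a * E23 = i3 a * E23 := by rw [h23]; exact pm_rel _ _ e he
  have q1 : E13 * E12 = E23 * E12 := by
    have := pm_mul i1 i2 i3 E12 r12 e
    rwa [← h13, ← h23] at this
  have q2 : E12 * E23 = E13 * E23 := by
    have := pm_mul i2 i3 i1 E23 r23 e
    rwa [s21, s31] at this
  have q3 : E12 * E12 = algebraMap k _ δ₁ * E12 := by
    have := pm_mul i1 i2 i1 E12 r12 e
    rw [D, s21] at this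
    exact this.symm
  unfold YBE
  apply TensorProduct.ext_threefold
  intro x y z
  rw [tmul_eq]
  generalize (asso k A).symm.toLinearMap ∘ₗ R.lTensor A ∘ₗ (asso k A).toLinearMap = S2 at R2 ⊢
  simp only [LinearMap.comp_apply, R1, R2]
  simp only [map_add, map_smul, map_mul, L_i1, L_i2, L_i3, L12, L13, L23, D, s21, s31, s32,
    ← h12, ← h13, ← h23]
  exact final c T _ _ _ _ _ _ _ _ _ _ (r12 x) q1 q3

end

end FrobAux

/-- Frobenius skein solutions, case `A = B = 0`: if `A` is commutative
(`μ∘τ = μ`), `Δ` is cocommutative (`τ∘Δ = Δ`), and `μ∘Δ = δ₁·id`, then for any `c, T ∈ k`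
the map `R = c·(Δ∘μ) + T·τ` satisfies the YBE; moreover if `T·T' = 1` and
`c·T' + c'·T + δ₁·c·c' = 0` then `c'·(Δ∘μ) + T'·τ` is a two-sided inverse of `R`. -/
theorem frobenius_skein_case_AB_zero (Δ : A →ₗ[k] A ⊗[k] A) (hΔ : IsFrobenius k A Δ)
    (hcomm : mu k A ∘ₗ tau k A = mu k A) (hcocomm : tau k A ∘ₗ Δ = Δ)
    (δ₁ : k) (hhandle : mu k A ∘ₗ Δ = δ₁ • LinearMap.id)
    (c T : k) :
    YBE k A (c • (Δ ∘ₗ mu k A) + T • tau k A) ∧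
    ∀ c' T' : k, T * T' = 1 → c * T' + c' * T + δ₁ * c * c' = 0 →
      (c' • (Δ ∘ₗ mu k A) + T' • tau k A) ∘ₗ (c • (Δ ∘ₗ mu k A) + T • tau k A) =
        LinearMap.id ∧
      (c • (Δ ∘ₗ mu k A) + T • tau k A) ∘ₗ (c' • (Δ ∘ₗ mu k A) + T' • tau k A) =
        LinearMap.id := by
  obtain ⟨-, hF1, hF2⟩ := hΔ
  have hc : ∀ a b : A, a * b = b * a := fun a b => by
    have := LinearMap.congr_fun hcomm (b ⊗ₜ a)
    simpa [mu, tau] using this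
  have hs : TensorProduct.comm k A A (Δ 1) = Δ 1 := by
    simpa [tau] using LinearMap.congr_fun hcocomm 1
  have hm : LinearMap.mul' k A (Δ 1) = δ₁ • (1 : A) := by
    simpa [mu] using LinearMap.congr_fun hhandle 1
  have hl : ∀ a, Δ a = (a ⊗ₜ[k] (1 : A)) * Δ 1 := fun a => by
    have := LinearMap.congr_fun hF1 (a ⊗ₜ 1)
    simp only [LinearMap.comp_apply, mu, asso, LinearMap.mul'_apply, mul_one,
      LinearMap.lTensor_tmul] at this
    rw [this]
    generalize Δ 1 = w
    induction w with
    | zero => simp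
    | tmul x y => simp
    | add x y hx hy => simp only [tmul_add, map_add, mul_add, hx, hy]
  have hr : ∀ a, Δ a = ((1 : A) ⊗ₜ[k] a) * Δ 1 := fun a => by
    have := LinearMap.congr_fun hF2 (1 ⊗ₜ a)
    simp only [LinearMap.comp_apply, mu, asso, LinearMap.mul'_apply, one_mul,
      LinearMap.rTensor_tmul] at this
    rw [this]
    generalize Δ 1 = w
    induction w with
    | zero => simp
    | tmul x y => simp [hc a]
    | add x y hx hy => simp only [add_tmul, map_add, mul_add, hx, hy]
  constructor
  · let _ : CommRing A := { ‹Ring A› with mul_comm := hc }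
    exact FrobAux.ybe Δ (Δ 1) hl hr hs δ₁ hm c T
  · have key : ∀ c T c' T' : k, T * T' = 1 → c * T' + c' * T + δ₁ * c * c' = 0 →
        (c' • (Δ ∘ₗ mu k A) + T' • tau k A) ∘ₗ (c • (Δ ∘ₗ mu k A) + T • tau k A) =
        LinearMap.id := by
      intro c T c' T' h1 h2
      refine LinearMap.ext fun u => ?_
      have a1 : ∀ u, mu k A (tau k A u) = mu k A u := LinearMap.congr_fun hcomm
      have a2 : ∀ u, tau k A (Δ u) = Δ u := LinearMap.congr_fun hcocomm
      have a3 : ∀ u, mu k A (Δ u) = δ₁ • u := LinearMap.congr_fun hhandle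
      have a4 : ∀ u, tau k A (tau k A u) = u := fun u => by simp [tau]
      simp only [LinearMap.comp_apply, LinearMap.add_apply, LinearMap.smul_apply, map_add,
        map_smul, a1, a2, a3, a4, LinearMap.id_apply]
      linear_combination (norm := module) h2 • Δ (mu k A u) + h1 • u
    intro c' T' h1 h2
    exact ⟨key c T c' T' h1 h2, key c' T' c T (by rw [mul_comm, h1])
      (by linear_combination h2)⟩
end
end

section
/- (Cocycle deformation of R-matrices, stated modulo t².) Let A be an associative unital k-algebra with a Frobenius structure Δ such that A is commutative (μ∘τ = μ) and Δ is cocommutative (τ∘Δ = Δ). Let φ₁ : A⊗A → A and φ₂ : A → A⊗A be k-linear maps satisfying all four 2-cocycle conditions d^{2,1}(φ₁) = 0, d^{2,2}_{(1)}(φ₁,φ₂) = 0, d^{2,2}_{(2)}(φ₁,φ₂) = 0, d^{2,3}(φ₂) = 0, together with φ₁∘τ = φ₁ and τ∘φ₂ = φ₂. Assume moreover that there exist c₀, c₁ ∈ k with μ∘Δ = c₀·id_A and μ∘φ₂ + φ₁∘Δ = c₁·id_A (i.e., (μ + tφ₁)∘(Δ + tφ₂) = δ₁·id with δ₁ = c₀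 + c₁t modulo t²). Fix C, T ∈ k and set R₀ = C·(Δ∘μ) + T·τ and R₁ = C·(Δ∘φ₁ + φ₂∘μ), both maps A⊗A → A⊗A. Then R₀ + tR₁ satisfies the Yang–Baxter equation over k[t]/(t²); explicitly: (1) (R₀⊗id)(id⊗R₀)(R₀⊗id) = (id⊗R₀)(R₀⊗id)(id⊗R₀), and (2) (R₁⊗id)(id⊗R₀)(R₀⊗id) + (R₀⊗id)(id⊗R₁)(R₀⊗id) + (R₀⊗id)(id⊗R₀)(R₁⊗id) = (id⊗R₁)(R₀⊗id)(id⊗R₀) + (id⊗R₀)(R₁⊗id)(id⊗R₀) + (id⊗R₀)(R₀⊗id)(id⊗R₁) as maps A⊗A⊗A → A⊗A⊗A. -/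
open TensorProduct

noncomputable section

variable (k A : Type*) [Field k] [Ring A] [Algebra k A]

/-- `R ⊗ id` on `(A⊗A)⊗A`. -/
def rext (R : A ⊗[k] A →ₗ[k] A ⊗[k] A) :
    ((A ⊗[k] A) ⊗[k] A) →ₗ[k] ((A ⊗[k] A) ⊗[k] A) := R.rTensor A

/-- `id ⊗ R` on `(A⊗A)⊗A` (via the associator). -/
def lext (R : A ⊗[k] A →ₗ[k] A ⊗[k] A) :
    ((A ⊗[k] A) ⊗[k] A) →ₗ[k] ((A ⊗[k] A) ⊗[k] A) :=
  (asso k A).symm.toLinearMap ∘ₗ R.lTensor A ∘ₗ (asso k A).toLinearMap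

theorem ring_ybe {K S : Type*} [Field K] [Ring S] [Algebra K S] (a b s r g : S) (C T : K)
    (hs : s * s = 1) (hr : r * r = 1) (hsr : s * r * s = r * s * r)
    (hb : b = s * r * a * r * s) (has : a * s = a) (hsa : s * a = a)
    (haa : a * a = g * a) (hbb : b * b = g * b)
    (hab : a * b = b * a) (hara : a * r * a = a * b) :
    (C • a + T • s) * (C • b + T • r) * (C • a + T • s) =
      (C • b + T • r) * (C • a + T • s) * (C • b + T • r) := by
  have hrb : r * b = b := by
    calc r * b = (r * s * r) * a * r * s := by rw [hb]; noncomm_ring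
      _ = s * r * (s * a) * r * s := by rw [← hsr]; noncomm_ring
      _ = b := by rw [hsa, hb]
  have hbr : b * r = b := by
    calc b * r = s * r * a * (r * s * r) := by rw [hb]; noncomm_ring
      _ = s * r * (a * s) * r * s := by rw [← hsr]; noncomm_ring
      _ = b := by rw [has, hb]
  have hsbs : s * b * s = r * a * r := by
    calc s * b * s = (s * s) * r * a * r * (s * s) := by rw [hb]; noncomm_ring
      _ = _ := by rw [hs]; noncomm_ring
  have hbsr : b * s * r = s * r * a := by
    calc b * s * r = s * r * a * (r * (s * s) * r) := by rw [hb]; noncomm_ring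
      _ = s * r * a * (r * r) := by rw [hs]; noncomm_ring
      _ = _ := by rw [hr]; noncomm_ring
  have hrsb : r * s * b = a * r * s := by
    calc r * s * b = (r * (s * s) * r) * a * r * s := by rw [hb]; noncomm_ring
      _ = (r * r) * a * r * s := by rw [hs]; noncomm_ring
      _ = _ := by rw [hr]; noncomm_ring
  have hbsb : b * s * b = a * b := by
    calc b * s * b = b * s * (r * b) := by rw [hrb]
      _ = (b * s * r) * b := by noncomm_ring
      _ = s * r * (a * b) := by rw [hbsr]; noncomm_ring
      _ = s * (r * b) * a := by rw [hab]; noncomm_ring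
      _ = s * (a * b) := by rw [hrb, hab]; noncomm_ring
      _ = (s * a) * b := by noncomm_ring
      _ = a * b := by rw [hsa]
  have e1 : a * b * a = b * a * b := by
    calc a * b * a = (a * a) * b := by rw [mul_assoc, ← hab, ← mul_assoc]
      _ = g * (b * a) := by rw [haa, mul_assoc, hab]
      _ = (b * b) * a := by rw [hbb, mul_assoc]
      _ = b * a * b := by rw [mul_assoc, ← hab, ← mul_assoc, hab]
  have e2 : a * b * s = a * b := by rw [hab, mul_assoc, has]
  have e3 : s * b * a = a * b := by rw [mul_assoc, ← hab, ← mul_assoc, hsa]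
  have e4 : b * a * r = a * b := by rw [← hab, mul_assoc, hbr]
  have e5 : r * a * b = a * b := by rw [mul_assoc, hab, ← mul_assoc, hrb]
  simp only [mul_add, add_mul, smul_mul_assoc, mul_smul_comm, smul_add, smul_smul,
    e1, e2, e3, e4, e5, hara, hbsb, hsbs, hbsr, hrsb, hsr]
  module

theorem dual_ybe {K S : Type*} [Field K] [Ring S] [Algebra K S] (a b s r a1 b1 : S)
    (c₀ c₁ C T : K)
    (hs : s * s = 1) (hr : r * r = 1) (hsr : s * r * s = r * s * r)
    (hb : b = s * r * a * r * s) (has : a * s = a) (hsa : s * a = a)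
    (hb1 : b1 = s * r * a1 * r * s) (ha1s : a1 * s = a1) (hsa1 : s * a1 = a1)
    (haa : a * a = c₀ • a) (haa1 : a * a1 + a1 * a = c₀ • a1 + c₁ • a)
    (hbb : b * b = c₀ • b) (hbb1 : b * b1 + b1 * b = c₀ • b1 + c₁ • b)
    (hab : a * b = b * a) (hara : a * r * a = a * b)
    (hab1 : a * b1 + a1 * b = b * a1 + b1 * a)
    (hara1 : a * r * a1 + a1 * r * a = a * b1 + a1 * b) :
    (C • a + T • s) * (C • b + T • r) * (C • a + T • s) =
      (C • b + T • r) * (C • a + T • s) * (C • b + T • r) ∧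
    (C • a1) * (C • b + T • r) * (C • a + T • s) + (C • a + T • s) * (C • b1) * (C • a + T • s)
      + (C • a + T • s) * (C • b + T • r) * (C • a1) =
    (C • b1) * (C • a + T • s) * (C • b + T • r) + (C • b + T • r) * (C • a1) * (C • b + T • r)
      + (C • b + T • r) * (C • a + T • s) * (C • b1) := by
  have ext' : ∀ x y : TrivSqZeroExt S S, x.fst = y.fst → x.snd = y.snd → x = y :=
    fun x y h1 h2 => TrivSqZeroExt.ext h1 h2
  obtain ⟨u, hu0, hu1⟩ : ∃ u : S → S → TrivSqZeroExt S S,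
      (∀ x y, (u x y).fst = x) ∧ (∀ x y, (u x y).snd = y) :=
    ⟨fun x y => (x, y), fun _ _ => rfl, fun _ _ => rfl⟩
  have key := ring_ybe (K := K) (S := TrivSqZeroExt S S) (u a a1) (u b b1) (u s 0) (u r 0)
    (u (algebraMap K S c₀) (algebraMap K S c₁)) C T
    (by apply ext' <;> simp [hu0, hu1, hs])
    (by apply ext' <;> simp [hu0, hu1, hr])
    (by apply ext' <;> simp [hu0, hu1, hsr])
    (by apply ext' <;> simp [hu0, hu1, hb, hb1, mul_assoc])
    (by apply ext' <;> simp [hu0, hu1, has, ha1s])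
    (by apply ext' <;> simp [hu0, hu1, hsa, hsa1])
    (by apply ext' <;> simp [hu0, hu1, haa, haa1, ← Algebra.smul_def])
    (by apply ext' <;> simp [hu0, hu1, hbb, hbb1, ← Algebra.smul_def])
    (by apply ext' <;> simp [hu0, hu1, hab, hab1])
    (by
      apply ext'
      · simp [hu0, hara]
      · simp [hu0, hu1, ← hara1])
  have k0 := congrArg TrivSqZeroExt.fst key
  have k1 := congrArg TrivSqZeroExt.snd key
  simp only [hu0, hu1, TrivSqZeroExt.fst_mul, TrivSqZeroExt.snd_mul, TrivSqZeroExt.fst_add,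
    TrivSqZeroExt.snd_add, TrivSqZeroExt.fst_smul, TrivSqZeroExt.snd_smul, smul_zero, add_zero,
    smul_eq_mul, op_smul_eq_mul] at k0 k1
  refine ⟨k0, ?_⟩
  simp only [mul_add, add_mul, mul_assoc] at k1 ⊢
  linear_combination (norm := module) k1

section
variable {K V₁ V₂ V₃ : Type*} [Field K] [AddCommGroup V₁] [AddCommGroup V₂] [AddCommGroup V₃]
  [Module K V₁] [Module K V₂] [Module K V₃]

theorem abs_rel (D q : V₁ →ₗ[K] V₂) (m p : V₂ →ₗ[K] V₁)
    (D12 D23 q12 q23 : V₂ →ₗ[K] V₃) (m12 m23 p12 p23 : V₃ →ₗ[K] V₂) (r : V₃ →ₗ[K] V₃)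
    (F1 : ∀ x, m12 (D23 x) = D (m x)) (F1' : ∀ x, p12 (D23 x) + m12 (q23 x) = D (p x) + q (m x))
    (F2 : ∀ x, m23 (D12 x) = D (m x)) (F2' : ∀ x, p23 (D12 x) + m23 (q12 x) = D (p x) + q (m x))
    (G : ∀ x, m12 (r (D12 x)) = D (m x))
    (G' : ∀ x, p12 (r (D12 x)) + m12 (r (q12 x)) = D (p x) + q (m x))
    (As : ∀ x, m (m12 x) = m (m23 x))
    (As' : ∀ x, m (p12 x) + p (m12 x) = m (p23 x) + p (m23 x))
    (Co : ∀ x, D12 (D x) = D23 (D x))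
    (Co' : ∀ x, D12 (q x) + q12 (D x) = D23 (q x) + q23 (D x)) (x : V₃) :
    D12 (m12 (D23 (m23 x))) = D23 (m23 (D12 (m12 x))) ∧
    D12 (m12 (r (D12 (m12 x)))) = D12 (m12 (D23 (m23 x))) ∧
    D12 (m12 (D23 (p23 x) + q23 (m23 x))) + (D12 (p12 (D23 (m23 x))) + q12 (m12 (D23 (m23 x)))) =
    D23 (m23 (D12 (p12 x) + q12 (m12 x))) + (D23 (p23 (D12 (m12 x))) + q23 (m23 (D12 (m12 x)))) ∧
    D12 (m12 (r (D12 (p12 x) + q12 (m12 x))))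
      + (D12 (p12 (r (D12 (m12 x)))) + q12 (m12 (r (D12 (m12 x))))) =
    D12 (m12 (D23 (p23 x) + q23 (m23 x))) + (D12 (p12 (D23 (m23 x))) + q12 (m12 (D23 (m23 x)))) := by
  have f1 := congrArg D12 (F1' (m23 x))
  have f2 := congrArg D23 (F2' (m12 x))
  have g := congrArg D12 (G' (m12 x))
  have as := congrArg (fun y => D12 (D y)) (As' x)
  have co := Co' (m (m12 x))
  simp only [map_add, F1, F2, G, As, ← Co] at *
  refine ⟨trivial, trivial, ?_, ?_⟩
  · linear_combination (norm := module) f1 - f2 - as + co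
  · linear_combination (norm := module) g - f1 + as
end

/-- cocycle deformation of `R`-matrices, modulo `t²`: let `A` be commutative
and cocommutative with Frobenius structure `Δ`, let `(φ₁,φ₂)` satisfy all four 2-cocycle
conditions, `φ₁∘τ = φ₁`, `τ∘φ₂ = φ₂`, and suppose `μ∘Δ = c₀·id` and
`μ∘φ₂ + φ₁∘Δ = c₁·id`. Put `R₀ = C·(Δ∘μ) + T·τ` and `R₁ = C·(Δ∘φ₁ + φ₂∘μ)`. Then
`R₀ + tR₁` satisfies the YBE over `k[t]/(t²)`, i.e. the `t⁰`-part (1) and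
`t¹`-part (2) hold. -/
theorem cocycle_deformation_of_R_matrix (Δ : A →ₗ[k] A ⊗[k] A) (hΔ : IsFrobenius k A Δ)
    (hcomm : mu k A ∘ₗ tau k A = mu k A) (hcocomm : tau k A ∘ₗ Δ = Δ)
    (φ₁ : A ⊗[k] A →ₗ[k] A) (φ₂ : A →ₗ[k] A ⊗[k] A)
    (h1 : d21 k A φ₁ = 0) (h2 : d221 k A Δ φ₁ φ₂ = 0) (h2' : d222 k A Δ φ₁ φ₂ = 0)
    (h3 : d23 k A Δ φ₂ = 0)
    (hφ₁τ : φ₁ ∘ₗ tau k A = φ₁) (hτφ₂ : tau k A ∘ₗ φ₂ = φ₂)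
    (c₀ c₁ : k)
    (hc₀ : mu k A ∘ₗ Δ = c₀ • LinearMap.id)
    (hc₁ : mu k A ∘ₗ φ₂ + φ₁ ∘ₗ Δ = c₁ • LinearMap.id)
    (C T : k)
    (R₀ R₁ : A ⊗[k] A →ₗ[k] A ⊗[k] A)
    (hR₀ : R₀ = C • (Δ ∘ₗ mu k A) + T • tau k A)
    (hR₁ : R₁ = C • (Δ ∘ₗ φ₁ + φ₂ ∘ₗ mu k A)) :
    rext k A R₀ ∘ₗ lext k A R₀ ∘ₗ rext k A R₀ =
      lext k A R₀ ∘ₗ rext k A R₀ ∘ₗ lext k A R₀ ∧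
    rext k A R₁ ∘ₗ lext k A R₀ ∘ₗ rext k A R₀ +
      rext k A R₀ ∘ₗ lext k A R₁ ∘ₗ rext k A R₀ +
      rext k A R₀ ∘ₗ lext k A R₀ ∘ₗ rext k A R₁ =
    lext k A R₁ ∘ₗ rext k A R₀ ∘ₗ lext k A R₀ +
      lext k A R₀ ∘ₗ rext k A R₁ ∘ₗ lext k A R₀ +
      lext k A R₀ ∘ₗ rext k A R₀ ∘ₗ lext k A R₁ := by
  have hm : ∀ x, mu k A (tau k A x) = mu k A x := fun x => LinearMap.congr_fun hcomm x
  have hD : ∀ x, tau k A (Δ x) = Δ x := fun x => LinearMap.congr_fun hcocomm x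
  have hp : ∀ x, φ₁ (tau k A x) = φ₁ x := fun x => LinearMap.congr_fun hφ₁τ x
  have hq : ∀ x, tau k A (φ₂ x) = φ₂ x := fun x => LinearMap.congr_fun hτφ₂ x
  obtain ⟨co, fr1, fr2⟩ := hΔ
  have tt : tau k A ∘ₗ tau k A = LinearMap.id := by
    ext x y; simp [tau]
  -- naturality
  have nat : ∀ f : A ⊗[k] A →ₗ[k] A ⊗[k] A, lext k A f =
      rext k A (tau k A) * lext k A (tau k A) * rext k A f * lext k A (tau k A)
        * rext k A (tau k A) := by
    intro f
    ext x y z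
    simp only [rext, lext, tau, asso, Module.End.mul_apply, LinearMap.comp_apply,
      TensorProduct.AlgebraTensorModule.curry_apply, TensorProduct.curry_apply,
      LinearMap.restrictScalars_self, LinearEquiv.coe_coe, LinearMap.rTensor_tmul,
      LinearMap.lTensor_tmul, TensorProduct.assoc_tmul, TensorProduct.assoc_symm_tmul,
      TensorProduct.comm_tmul]
    induction f (y ⊗ₜ[k] z) with
    | zero => simp
    | tmul u v => simp
    | add u v hu hv => simp only [TensorProduct.tmul_add, TensorProduct.add_tmul, map_add, hu, hv]
  have rmul : ∀ f g : A ⊗[k] A →ₗ[k] A ⊗[k] A, rext k A f * rext k A g = rext k A (f ∘ₗ g) := by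
    intro f g
    simp only [rext, Module.End.mul_eq_comp, LinearMap.rTensor_comp]
  have lmul : ∀ f g : A ⊗[k] A →ₗ[k] A ⊗[k] A, lext k A f * lext k A g = lext k A (f ∘ₗ g) := by
    intro f g
    apply LinearMap.ext; intro x
    simp [lext, LinearMap.lTensor_comp]
  have radd : ∀ f g : A ⊗[k] A →ₗ[k] A ⊗[k] A,
      rext k A (f + g) = rext k A f + rext k A g := by
    intro f g; simp only [rext, LinearMap.rTensor_add]
  have ladd : ∀ f g : A ⊗[k] A →ₗ[k] A ⊗[k] A,
      lext k A (f + g) = lext k A f + lext k A g := by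
    intro f g
    simp only [lext, LinearMap.lTensor_add, LinearMap.comp_add, LinearMap.add_comp]
  have rsmul : ∀ (c : k) (f : A ⊗[k] A →ₗ[k] A ⊗[k] A),
      rext k A (c • f) = c • rext k A f := by
    intro c f; simp only [rext, LinearMap.rTensor_smul]
  have lsmul : ∀ (c : k) (f : A ⊗[k] A →ₗ[k] A ⊗[k] A),
      lext k A (c • f) = c • lext k A f := by
    intro c f
    simp only [lext, LinearMap.lTensor_smul, LinearMap.comp_smul, LinearMap.smul_comp]
  have rone : rext k A LinearMap.id = 1 := by
    simp only [rext, LinearMap.rTensor_id]; rfl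
  have lone : lext k A LinearMap.id = 1 := by
    apply LinearMap.ext; intro x
    simp [lext]
  have braid : rext k A (tau k A) * lext k A (tau k A) * rext k A (tau k A) =
      lext k A (tau k A) * rext k A (tau k A) * lext k A (tau k A) := by
    ext x y z
    simp [rext, lext, tau, asso]
  have G : ∀ (f : A →ₗ[k] A ⊗[k] A) (g : A ⊗[k] A →ₗ[k] A), (∀ x, tau k A (f x) = f x) →
      (∀ x, g (tau k A x) = g x) → ∀ x,
      g.rTensor A (lext k A (tau k A) (f.rTensor A x)) =
        g.rTensor A ((asso k A).symm (f.lTensor A (tau k A x))) := by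
    intro f g hf hg x
    induction x with
    | zero => simp
    | add x y hx hy => simp only [map_add, hx, hy]
    | tmul x y =>
      simp only [LinearMap.rTensor_tmul, tau, TensorProduct.comm_tmul, LinearEquiv.coe_coe,
        LinearMap.lTensor_tmul]
      induction f x with
      | zero => simp
      | add u v hu hv =>
        simp only [TensorProduct.tmul_add, TensorProduct.add_tmul, map_add, hu, hv]
      | tmul u v =>
        have := hg (y ⊗ₜ u)
        simp only [tau, TensorProduct.comm_tmul, LinearEquiv.coe_coe] at this
        simp [lext, asso, tau, this]
  have square : ∀ x, mu k A (Δ x) = c₀ • x := fun x => LinearMap.congr_fun hc₀ x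
  have square' : ∀ x, mu k A (φ₂ x) + φ₁ (Δ x) = c₁ • x := fun x => LinearMap.congr_fun hc₁ x
  have E0 : (Δ ∘ₗ mu k A) ∘ₗ (Δ ∘ₗ mu k A) = c₀ • (Δ ∘ₗ mu k A) := by
    apply LinearMap.ext; intro x
    simp [square]
  have E1 : (Δ ∘ₗ mu k A) ∘ₗ (Δ ∘ₗ φ₁ + φ₂ ∘ₗ mu k A) + (Δ ∘ₗ φ₁ + φ₂ ∘ₗ mu k A) ∘ₗ (Δ ∘ₗ mu k A)
      = c₀ • (Δ ∘ₗ φ₁ + φ₂ ∘ₗ mu k A) + c₁ • (Δ ∘ₗ mu k A) := by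
    apply LinearMap.ext; intro x
    have := congrArg Δ (square' (mu k A x))
    simp only [map_add, map_smul] at this
    simp only [LinearMap.add_apply, LinearMap.comp_apply, LinearMap.smul_apply, square, map_smul,
      map_add]
    linear_combination (norm := module) this
  have sE0 : tau k A ∘ₗ (Δ ∘ₗ mu k A) = Δ ∘ₗ mu k A := by
    rw [← LinearMap.comp_assoc, hcocomm]
  have E0s : (Δ ∘ₗ mu k A) ∘ₗ tau k A = Δ ∘ₗ mu k A := by
    rw [LinearMap.comp_assoc, hcomm]
  have sE1 : tau k A ∘ₗ (Δ ∘ₗ φ₁ + φ₂ ∘ₗ mu k A) = Δ ∘ₗ φ₁ + φ₂ ∘ₗ mu k A := by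
    apply LinearMap.ext; intro x
    simp [hD, hq]
  have E1s : (Δ ∘ₗ φ₁ + φ₂ ∘ₗ mu k A) ∘ₗ tau k A = Δ ∘ₗ φ₁ + φ₂ ∘ₗ mu k A := by
    apply LinearMap.ext; intro x
    simp [hm, hp]
  have d1 : ∀ x, Δ (φ₁ x) + φ₂ (mu k A x) = φ₁.rTensor A ((asso k A).symm (Δ.lTensor A x))
      + (mu k A).rTensor A ((asso k A).symm (φ₂.lTensor A x)) := by
    intro x
    have := LinearMap.congr_fun h2 x
    simp only [d221, LinearMap.sub_apply, LinearMap.add_apply, LinearMap.comp_apply,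
      LinearMap.zero_apply, LinearEquiv.coe_coe] at this
    linear_combination (norm := module) this
  have f1 : ∀ x, Δ (mu k A x) = (mu k A).rTensor A ((asso k A).symm (Δ.lTensor A x)) :=
    fun x => LinearMap.congr_fun fr1 x
  have rel := abs_rel Δ φ₂ (mu k A) φ₁ (Δ.rTensor A) ((asso k A).symm.toLinearMap ∘ₗ Δ.lTensor A)
    (φ₂.rTensor A) ((asso k A).symm.toLinearMap ∘ₗ φ₂.lTensor A)
    ((mu k A).rTensor A) ((mu k A).lTensor A ∘ₗ (asso k A).toLinearMap)
    (φ₁.rTensor A) (φ₁.lTensor A ∘ₗ (asso k A).toLinearMap) (lext k A (tau k A))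
    (fun x => (f1 x).symm) (fun x => (d1 x).symm)
    (fun x => (LinearMap.congr_fun fr2 x).symm)
    (fun x => by
      have := LinearMap.congr_fun h2' x
      simp only [d222, LinearMap.sub_apply, LinearMap.add_apply, LinearMap.comp_apply,
        LinearMap.zero_apply, LinearEquiv.coe_coe] at this ⊢
      linear_combination (norm := module) -this)
    (fun x => by rw [G Δ (mu k A) hD hm, ← f1, hm])
    (fun x => by rw [G Δ φ₁ hD hp, G φ₂ (mu k A) hq hm, ← d1, hp, hm])
    (fun x => by
      induction x with
      | zero => simp
      | add x y hx hy => simp only [map_add, hx, hy]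
      | tmul x z =>
        induction x with
        | zero => simp
        | add x y hx hy => simp only [TensorProduct.add_tmul, map_add, hx, hy]
        | tmul x y => simp [mu, asso, mul_assoc])
    (fun x => by
      have := LinearMap.congr_fun h1 x
      simp only [d21, LinearMap.sub_apply, LinearMap.add_apply, LinearMap.comp_apply,
        LinearMap.zero_apply, LinearEquiv.coe_coe] at this ⊢
      linear_combination (norm := module) this)
    (fun x => LinearMap.congr_fun co x)
    (fun x => by
      have := LinearMap.congr_fun h3 x
      simp only [d23, LinearMap.sub_apply, LinearMap.add_apply, LinearMap.comp_apply,
        LinearMap.zero_apply, LinearEquiv.coe_coe] at this ⊢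
      linear_combination (norm := module) this)
  have ra0 : ∀ x, rext k A (Δ ∘ₗ mu k A) x = Δ.rTensor A ((mu k A).rTensor A x) := by
    intro x; simp only [rext, LinearMap.rTensor_comp, LinearMap.comp_apply]
  have la0 : ∀ x, lext k A (Δ ∘ₗ mu k A) x = ((asso k A).symm.toLinearMap ∘ₗ Δ.lTensor A)
      (((mu k A).lTensor A ∘ₗ (asso k A).toLinearMap) x) := by
    intro x; simp only [lext, LinearMap.lTensor_comp, LinearMap.comp_apply]
  have ra1 : ∀ x, rext k A (Δ ∘ₗ φ₁ + φ₂ ∘ₗ mu k A) x =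
      Δ.rTensor A (φ₁.rTensor A x) + φ₂.rTensor A ((mu k A).rTensor A x) := by
    intro x
    simp only [rext, LinearMap.rTensor_add, LinearMap.rTensor_comp, LinearMap.comp_apply,
      LinearMap.add_apply]
  have la1 : ∀ x, lext k A (Δ ∘ₗ φ₁ + φ₂ ∘ₗ mu k A) x =
      ((asso k A).symm.toLinearMap ∘ₗ Δ.lTensor A)
        ((φ₁.lTensor A ∘ₗ (asso k A).toLinearMap) x) +
      ((asso k A).symm.toLinearMap ∘ₗ φ₂.lTensor A)
        (((mu k A).lTensor A ∘ₗ (asso k A).toLinearMap) x) := by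
    intro x
    simp only [lext, LinearMap.lTensor_add, LinearMap.lTensor_comp, LinearMap.comp_apply,
      LinearMap.add_apply, map_add]
  have fin := dual_ybe (rext k A (Δ ∘ₗ mu k A)) (lext k A (Δ ∘ₗ mu k A)) (rext k A (tau k A))
    (lext k A (tau k A)) (rext k A (Δ ∘ₗ φ₁ + φ₂ ∘ₗ mu k A)) (lext k A (Δ ∘ₗ φ₁ + φ₂ ∘ₗ mu k A))
    c₀ c₁ C T
    (by rw [rmul, tt, rone]) (by rw [lmul, tt, lone]) braid
    (nat _) (by rw [rmul, E0s]) (by rw [rmul, sE0])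
    (nat _) (by rw [rmul, E1s]) (by rw [rmul, sE1])
    (by rw [rmul, E0, rsmul]) (by rw [rmul, rmul, ← radd, E1, radd, rsmul, rsmul])
    (by rw [lmul, E0, lsmul]) (by rw [lmul, lmul, ← ladd, E1, ladd, lsmul, lsmul])
    (by
      apply LinearMap.ext; intro x
      rw [Module.End.mul_apply, Module.End.mul_apply, ra0, la0, la0, ra0]
      exact (rel x).1)
    (by
      apply LinearMap.ext; intro x
      rw [Module.End.mul_apply, Module.End.mul_apply, Module.End.mul_apply, ra0, la0, ra0, ra0]
      exact (rel x).2.1)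
    (by
      apply LinearMap.ext; intro x
      simp only [Module.End.mul_apply, LinearMap.add_apply, ra0, la0, ra1, la1]
      exact (rel x).2.2.1)
    (by
      apply LinearMap.ext; intro x
      simp only [Module.End.mul_apply, LinearMap.add_apply, ra0, la0, ra1, la1]
      exact (rel x).2.2.2)
  rw [hR₀, hR₁]
  rw [radd, ladd, rsmul, lsmul, rsmul, lsmul, rsmul, lsmul]
  exact fin
end
end
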